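/- arXiv:1010.0086 — 3 statements merged into one kernel-verified Lean document; each statement's English description precedes it below -/
import Mathlib

section
/- For every Lusztig datum a ∈ ℬ and every 1 ≤ i ≤ n: M_K(f̃_i^* a) = M_K(a) for every K ∈ M_n^× with i ∈ K or i+1 ∉ K, and M_{[i+1,n+1]}(f̃_i^* a) = M_{[i+1,n+1]}(a) − 1. (Hence Ψ intertwines f̃_i^* on ℬ with the lowering Kashiwara operator on e-BZ data.) -/
/-- The set of Lusztig data: `a : Π → ℤ_{≥0}`, modeled as an integer-valued function on
`ℤ × ℤ` that is nonnegative everywhere and vanishes off `Π = {(k,l) : 1 ≤ k < l ≤ n+1}`. -/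
def IsLusztig (n : ℕ) (a : ℤ → ℤ → ℤ) : Prop :=
  (∀ k l : ℤ, 0 ≤ a k l) ∧ ∀ k l : ℤ, ¬(1 ≤ k ∧ k < l ∧ l ≤ (n : ℤ) + 1) → a k l = 0

/-- The `p`-th smallest element (1-indexed) `k_p` of a Maya diagram `K`. -/
def kth (K : Finset ℕ) (p : ℕ) : ℕ := (K.sort (· ≤ ·)).getD (p - 1) 0

/-- `C = (c_{p,q})_{1 ≤ p ≤ q ≤ l}` (with `l = |K|`) is a `K`-tableau: an upper-triangular
integer matrix with `c_{p,p} = k_p`, `c_{p,q} ≤ c_{p,q+1}` and `c_{p,q} < c_{p+1,q}`. -/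
def IsKTab (K : Finset ℕ) (c : ℕ → ℕ → ℤ) : Prop :=
  (∀ p : ℕ, 1 ≤ p → p ≤ K.card → c p p = (kth K p : ℤ)) ∧
  (∀ p q : ℕ, 1 ≤ p → p ≤ q → q + 1 ≤ K.card → c p q ≤ c p (q + 1)) ∧
  (∀ p q : ℕ, 1 ≤ p → p + 1 ≤ q → q ≤ K.card → c p q < c (p + 1) q)

/-- `Σ_{1 ≤ p < q ≤ l} a_{c_{p,q}, c_{p,q}+(q−p)}`. -/
def tabSum (a : ℤ → ℤ → ℤ) (K : Finset ℕ) (c : ℕ → ℕ → ℤ) : ℤ :=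
  ∑ p ∈ Finset.Icc 1 K.card, ∑ q ∈ Finset.Icc (p + 1) K.card,
    a (c p q) (c p q + ((q : ℤ) - (p : ℤ)))

/-- `M_K(a) = −Σ_{j=1}^{l} Σ_{i=1}^{k_j−1} a_{i,k_j} + min{ tabSum over K-tableaux }`,
for `K ∈ M_n^×`, with the conventions `M_∅(a) = M_{[1,n+1]}(a) = 0`. -/
noncomputable def MK (n : ℕ) (a : ℤ → ℤ → ℤ) (K : Finset ℕ) : ℤ :=
  if K = ∅ ∨ K = Finset.Icc 1 (n + 1) then 0
  else
    -(∑ k ∈ K, ∑ s ∈ Finset.Icc 1 (k - 1), a (s : ℤ) (k : ℤ)) +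
      sInf {z : ℤ | ∃ c : ℕ → ℕ → ℤ, IsKTab K c ∧ z = tabSum a K c}
/-- `A_l^{*(i)}(a) = Σ_{t=l+1}^{n+1} (a_{i,t} − a_{i+1,t+1})`. -/
def Astar (n : ℕ) (a : ℤ → ℤ → ℤ) (i l : ℕ) : ℤ :=
  ∑ t ∈ Finset.Icc (l + 1) (n + 1), (a (i : ℤ) (t : ℤ) - a ((i : ℤ) + 1) ((t : ℤ) + 1))

/-- `ε_i^*(a) = max{A_i^{*(i)}(a),…,A_n^{*(i)}(a)}`. -/
def epsStar (n : ℕ) (a : ℤ → ℤ → ℤ) (i : ℕ) : ℤ :=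
  ((Finset.Icc i n).image (Astar n a i)).max.unbotD 0

/-- `l_f(a,i)`: the minimal `l ∈ [i,n]` with `A_l^{*(i)}(a) = ε_i^*(a)`. -/
def lfStar (n : ℕ) (a : ℤ → ℤ → ℤ) (i : ℕ) : ℕ :=
  (((Finset.Icc i n).filter fun l => Astar n a i l = epsStar n a i).min).untopD 0

/-- `l_e(a,i)`: the maximal `l ∈ [i,n]` with `A_l^{*(i)}(a) = ε_i^*(a)`. -/
def leStar (n : ℕ) (a : ℤ → ℤ → ℤ) (i : ℕ) : ℕ :=
  (((Finset.Icc i n).filter fun l => Astar n a i l = epsStar n a i).max).unbotD 0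

/-- The operator `f̃_i^*`: increase `a_{i,l_f+1}` by 1 and decrease `a_{i+1,l_f+1}` by 1
(the latter discarded when `l_f = i`, the entry `(i+1,i+1)` being out of range). -/
def ftilStar (n : ℕ) (a : ℤ → ℤ → ℤ) (i : ℕ) : ℤ → ℤ → ℤ := fun k l =>
  if k = (i : ℤ) ∧ l = (lfStar n a i : ℤ) + 1 then a k l + 1
  else if k = (i : ℤ) + 1 ∧ l = (lfStar n a i : ℤ) + 1 ∧ (i : ℤ) < (lfStar n a i : ℤ) then
    a k l - 1
  else a k l

/-- The operator `ẽ_i^*` (for `ε_i^*(a) > 0`): decrease `a_{i,l_e+1}` by 1 and increase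
`a_{i+1,l_e+1}` by 1 (the latter discarded when `l_e = i`). -/
def etilStar (n : ℕ) (a : ℤ → ℤ → ℤ) (i : ℕ) : ℤ → ℤ → ℤ := fun k l =>
  if k = (i : ℤ) ∧ l = (leStar n a i : ℤ) + 1 then a k l - 1
  else if k = (i : ℤ) + 1 ∧ l = (leStar n a i : ℤ) + 1 ∧ (i : ℤ) < (leStar n a i : ℤ) then
    a k l + 1
  else a k l

theorem kth_mem_iff (K : Finset ℕ) (x : ℕ) :
    x ∈ K ↔ ∃ p, 1 ≤ p ∧ p ≤ K.card ∧ kth K p = x := by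
  rw [← Finset.mem_sort (· ≤ ·), List.mem_iff_getElem]
  constructor
  · rintro ⟨j, hj, h⟩
    refine ⟨j + 1, by omega, by simpa using hj, ?_⟩
    simp [kth, List.getD_eq_getElem?_getD, List.getElem?_eq_getElem hj, h]
  · rintro ⟨p, h1, h2, h⟩
    have hj : p - 1 < (K.sort (· ≤ ·)).length := by rw [Finset.length_sort]; omega
    refine ⟨p - 1, hj, ?_⟩
    rw [← h]
    simp [kth, List.getD_eq_getElem?_getD, List.getElem?_eq_getElem hj]

theorem kth_lt (K : Finset ℕ) {p q : ℕ} (h1 : 1 ≤ p) (h : p < q) (h2 : q ≤ K.card) :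
    kth K p < kth K q := by
  have hp : p - 1 < (K.sort (· ≤ ·)).length := by rw [Finset.length_sort]; omega
  have hq : q - 1 < (K.sort (· ≤ ·)).length := by rw [Finset.length_sort]; omega
  have hs : (K.sort (· ≤ ·)).SortedLT := Finset.sortedLT_sort K
  have := hs.strictMono_get (a := ⟨p - 1, hp⟩) (b := ⟨q - 1, hq⟩) (by
    simp only [Fin.mk_lt_mk]; omega)
  simpa [kth, List.getD_eq_getElem?_getD, List.getElem?_eq_getElem hp,
    List.getElem?_eq_getElem hq] using this

theorem tab_nonempty (K : Finset ℕ) : IsKTab K (fun p _ => (kth K p : ℤ)) := by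
  refine ⟨fun _ _ _ => rfl, fun _ _ _ _ _ => le_rfl, fun p q h1 h2 h3 => ?_⟩
  have := kth_lt K h1 (Nat.lt_succ_self p) (by omega)
  simp only [Nat.succ_eq_add_one] at this
  exact Int.ofNat_lt.2 this

theorem tab_row {K : Finset ℕ} {c : ℕ → ℕ → ℤ} (hc : IsKTab K c) {p q r : ℕ}
    (h1 : 1 ≤ p) (h2 : p ≤ q) (h3 : q ≤ r) (h4 : r ≤ K.card) : c p q ≤ c p r := by
  induction r, h3 using Nat.le_induction with
  | base => exact le_rfl
  | succ r hr ih => exact (ih (by omega)).trans (hc.2.1 p r h1 (by omega) h4)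

theorem tab_diag {K : Finset ℕ} {c : ℕ → ℕ → ℤ} (hc : IsKTab K c) {d p r : ℕ}
    (h1 : 1 ≤ p) (h3 : p < r) (h4 : r + d ≤ K.card) : c p (p + d) < c r (r + d) := by
  induction r, h3 using Nat.le_induction with
  | base =>
    have e1 := hc.2.1 p (p + d) h1 (by omega) (by omega)
    have e2 := hc.2.2 p (p + 1 + d) h1 (by omega) (by omega)
    rw [show p + d + 1 = p + 1 + d by omega] at e1
    exact lt_of_le_of_lt e1 e2
  | succ r hr ih =>
    have e1 := hc.2.1 r (r + d) (by omega) (by omega) (by omega)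
    have e2 := hc.2.2 r (r + 1 + d) (by omega) (by omega) (by omega)
    rw [show r + d + 1 = r + 1 + d by omega] at e1
    exact (ih (by omega)).trans (lt_of_le_of_lt e1 e2)

theorem tab_uniq {K : Finset ℕ} {c : ℕ → ℕ → ℤ} (hc : IsKTab K c) {d p r : ℕ}
    (h1 : 1 ≤ p) (h2 : 1 ≤ r) (h3 : p + d ≤ K.card) (h4 : r + d ≤ K.card)
    (h : c p (p + d) = c r (r + d)) : p = r := by
  rcases lt_trichotomy p r with h' | h' | h'
  · have := tab_diag hc h1 h' h4; omega
  · exact h'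
  · have := tab_diag hc h2 h' h3; omega

/-- The value `v` occurs on the `d`-th diagonal of `c`. -/
def Occ (K : Finset ℕ) (c : ℕ → ℕ → ℤ) (d : ℕ) (v : ℤ) : Prop :=
  ∃ p, 1 ≤ p ∧ p + d ≤ K.card ∧ c p (p + d) = v

open Classical in
theorem tab_count {K : Finset ℕ} {c : ℕ → ℕ → ℤ} (hc : IsKTab K c) (d : ℕ) (v : ℤ)
    (hd : 1 ≤ d) :
    (∑ p ∈ Finset.Icc 1 K.card, ∑ q ∈ Finset.Icc (p + 1) K.card,
      (if c p q = v ∧ c p q + ((q : ℤ) - (p : ℤ)) = v + d then (1 : ℤ) else 0))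
      = if Occ K c d v then 1 else 0 := by
  by_cases h : Occ K c d v
  · rw [if_pos h]
    obtain ⟨p0, h1, h2, h3⟩ := h
    rw [Finset.sum_eq_single p0, Finset.sum_eq_single (p0 + d)]
    · rw [if_pos]; refine ⟨h3, ?_⟩; rw [h3]; push_cast; ring
    · intro q hq hne
      rw [if_neg]
      rintro ⟨e1, e2⟩
      omega
    · intro hh; simp only [Finset.mem_Icc] at hh; omega
    · intro p hp hne
      apply Finset.sum_eq_zero
      intro q hq
      rw [if_neg]
      rintro ⟨e1, e2⟩
      simp only [Finset.mem_Icc] at hp hq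
      have : q = p + d := by omega
      subst this
      exact hne (tab_uniq hc hp.1 h1 hq.2 h2 (by rw [e1, h3]))
    · intro hh; simp only [Finset.mem_Icc] at hh; omega
  · rw [if_neg h]
    apply Finset.sum_eq_zero
    intro p hp
    apply Finset.sum_eq_zero
    intro q hq
    rw [if_neg]
    rintro ⟨e1, e2⟩
    simp only [Finset.mem_Icc] at hp hq
    have : q = p + d := by omega
    subst this
    exact h ⟨p, hp.1, hq.2, e1⟩

theorem Astar_step (n : ℕ) (a : ℤ → ℤ → ℤ) (ha : IsLusztig n a) (i l : ℕ) :
    Astar n a i l = (a i ((l : ℤ) + 1) - a ((i : ℤ) + 1) ((l : ℤ) + 1 + 1)) +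
      Astar n a i (l + 1) := by
  unfold Astar
  by_cases h : l ≤ n
  · rw [← Finset.add_sum_Ioc_eq_sum_Icc (by omega : l + 1 ≤ n + 1)]
    have hI : Finset.Ioc (l + 1) (n + 1) = Finset.Icc (l + 1 + 1) (n + 1) := by
      ext x; simp only [Finset.mem_Ioc, Finset.mem_Icc]; omega
    rw [hI]
    push_cast
    rfl
  · rw [Finset.Icc_eq_empty (by omega), Finset.Icc_eq_empty (by omega), ha.2 _ _ (by omega),
      ha.2 _ _ (by omega)]
    simp

theorem Astar_sum (n : ℕ) (a : ℤ → ℤ → ℤ) (ha : IsLusztig n a) (i l m : ℕ) :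
    ∑ j ∈ Finset.range m, (a i ((l : ℤ) + 1 + j) - a ((i : ℤ) + 1) ((l : ℤ) + 1 + j + 1)) =
      Astar n a i l - Astar n a i (l + m) := by
  induction m with
  | zero => simp
  | succ m ih =>
    rw [Finset.sum_range_succ, ih]
    have := Astar_step n a ha i (l + m)
    rw [← add_assoc l m 1]
    push_cast at this ⊢
    rw [this]
    ring_nf

theorem lf_spec (n : ℕ) (a : ℤ → ℤ → ℤ) (ha : IsLusztig n a) (i : ℕ) (hi : i ≤ n) :
    i ≤ lfStar n a i ∧ lfStar n a i ≤ n ∧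
    (∀ l, i ≤ l → Astar n a i l ≤ Astar n a i (lfStar n a i)) ∧
    (∀ l, i ≤ l → l < lfStar n a i → Astar n a i l < Astar n a i (lfStar n a i)) := by
  have hne : ((Finset.Icc i n).image (Astar n a i)).Nonempty :=
    ⟨Astar n a i i, Finset.mem_image_of_mem _ (by simp [hi])⟩
  have heps : epsStar n a i = ((Finset.Icc i n).image (Astar n a i)).max' hne := by
    unfold epsStar
    rw [← Finset.coe_max' hne]
    rfl
  have hmem := Finset.max'_mem _ hne
  rw [← heps, Finset.mem_image] at hmem
  obtain ⟨l0, hl0, hl0'⟩ := hmem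
  have hne2 : ((Finset.Icc i n).filter fun l => Astar n a i l = epsStar n a i).Nonempty :=
    ⟨l0, by simp only [Finset.mem_filter]; exact ⟨hl0, hl0'⟩⟩
  have hlf : lfStar n a i =
      ((Finset.Icc i n).filter fun l => Astar n a i l = epsStar n a i).min' hne2 := by
    unfold lfStar
    rw [← Finset.coe_min' hne2]
    rfl
  have hm := Finset.min'_mem _ hne2
  rw [← hlf, Finset.mem_filter, Finset.mem_Icc] at hm
  have hle : ∀ l, i ≤ l → l ≤ n → Astar n a i l ≤ epsStar n a i := by
    intro l h1 h2
    rw [heps]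
    exact Finset.le_max' _ _ (Finset.mem_image_of_mem _ (by simp [h1, h2]))
  refine ⟨hm.1.1, hm.1.2, ?_, ?_⟩
  · intro l hl
    rw [hm.2]
    by_cases h : l ≤ n
    · exact hle l hl h
    · have h0 : Astar n a i l = 0 := by
        unfold Astar; rw [Finset.Icc_eq_empty (by omega)]; simp
      have h1 : Astar n a i (n + 1) = 0 := by
        unfold Astar; rw [Finset.Icc_eq_empty (by omega)]; simp
      have h2 := Astar_step n a ha i n
      rw [h1, ha.2 ((i : ℤ) + 1) _ (by omega)] at h2
      have h3 := ha.1 i ((n : ℤ) + 1)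
      have := hle n hi le_rfl
      omega
  · intro l h1 h2
    rw [hm.2]
    refine lt_of_le_of_ne (hle l h1 (by omega)) ?_
    intro h
    have : lfStar n a i ≤ l := by
      rw [hlf]
      exact Finset.min'_le _ _ (by simp only [Finset.mem_filter, Finset.mem_Icc]; exact ⟨⟨h1, by omega⟩, h⟩)
    omega

theorem ftil_eq (n : ℕ) (a : ℤ → ℤ → ℤ) (i : ℕ) (k l : ℤ) :
    ftilStar n a i k l = a k l
      + (if k = (i : ℤ) ∧ l = (lfStar n a i : ℤ) + 1 then 1 else 0)
      - (if k = (i : ℤ) + 1 ∧ l = (lfStar n a i : ℤ) + 1 ∧ (i : ℤ) < (lfStar n a i : ℤ)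
          then 1 else 0) := by
  unfold ftilStar
  split_ifs <;> omega

theorem ftil_nonneg (n : ℕ) (a : ℤ → ℤ → ℤ) (ha : IsLusztig n a) (i : ℕ) (hi : i ≤ n)
    (k l : ℤ) : 0 ≤ ftilStar n a i k l := by
  obtain ⟨h1, h2, h3, h4⟩ := lf_spec n a ha i hi
  have hk := ha.1 k l
  rw [ftil_eq]
  by_cases h : k = (i : ℤ) + 1 ∧ l = (lfStar n a i : ℤ) + 1 ∧ (i : ℤ) < (lfStar n a i : ℤ)
  · rw [if_pos h, if_neg (by omega)]
    obtain ⟨rfl, rfl, h⟩ := h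
    obtain ⟨m, hm⟩ : ∃ m, lfStar n a i = m + 1 := ⟨lfStar n a i - 1, by omega⟩
    have h5 := h4 m (by omega) (by omega)
    rw [Astar_step n a ha i m, hm] at h5
    have h6 := ha.1 i ((m : ℤ) + 1)
    rw [hm]
    push_cast
    omega
  · rw [if_neg h]
    split_ifs <;> omega

theorem tabSum_nonneg (a : ℤ → ℤ → ℤ) (h : ∀ k l, 0 ≤ a k l) (K : Finset ℕ)
    (c : ℕ → ℕ → ℤ) : 0 ≤ tabSum a K c :=
  Finset.sum_nonneg fun _ _ => Finset.sum_nonneg fun _ _ => h _ _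

theorem Occ_zero {K : Finset ℕ} {c : ℕ → ℕ → ℤ} (hc : IsKTab K c) (x : ℕ) :
    Occ K c 0 (x : ℤ) ↔ x ∈ K := by
  rw [kth_mem_iff]
  constructor
  · rintro ⟨p, h1, h2, h3⟩
    simp only [add_zero] at h2 h3
    rw [hc.1 p h1 h2] at h3
    exact ⟨p, h1, h2, by exact_mod_cast h3⟩
  · rintro ⟨p, h1, h2, h3⟩
    refine ⟨p, h1, h2, ?_⟩
    rw [add_zero, hc.1 p h1 h2, h3]

/-- The sum of the columns indexed by `K`. -/
def colSum (a : ℤ → ℤ → ℤ) (K : Finset ℕ) : ℤ :=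
  ∑ k ∈ K, ∑ s ∈ Finset.Icc 1 (k - 1), a (s : ℤ) (k : ℤ)

theorem colSum_ftil (n : ℕ) (a : ℤ → ℤ → ℤ) (ha : IsLusztig n a) (i : ℕ) (hi1 : 1 ≤ i)
    (hi : i ≤ n) (K : Finset ℕ) :
    colSum (ftilStar n a i) K = colSum a K +
      (if lfStar n a i = i ∧ i + 1 ∈ K then 1 else 0) := by
  obtain ⟨h1, h2, -, -⟩ := lf_spec n a ha i hi
  unfold colSum
  have key : ∀ k : ℕ, ∑ s ∈ Finset.Icc 1 (k - 1), ftilStar n a i (s : ℤ) (k : ℤ)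
      = ∑ s ∈ Finset.Icc 1 (k - 1), a (s : ℤ) (k : ℤ)
        + (if i + 1 = k then (if lfStar n a i = i then 1 else 0) else 0) := by
    intro k
    simp only [ftil_eq, Finset.sum_sub_distrib, Finset.sum_add_distrib]
    have e1 : ∑ s ∈ Finset.Icc 1 (k - 1),
        (if (s : ℤ) = (i : ℤ) ∧ (k : ℤ) = (lfStar n a i : ℤ) + 1 then (1 : ℤ) else 0)
        = if k = lfStar n a i + 1 then 1 else 0 := by
      rw [Finset.sum_eq_single i]
      · split_ifs <;> omega
      · intro s _ hs; rw [if_neg]; omega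
      · intro hh; simp only [Finset.mem_Icc] at hh; rw [if_neg]; omega
    have e2 : ∑ s ∈ Finset.Icc 1 (k - 1),
        (if (s : ℤ) = (i : ℤ) + 1 ∧ (k : ℤ) = (lfStar n a i : ℤ) + 1 ∧
          (i : ℤ) < (lfStar n a i : ℤ) then (1 : ℤ) else 0)
        = if k = lfStar n a i + 1 ∧ i < lfStar n a i then 1 else 0 := by
      rw [Finset.sum_eq_single (i + 1)]
      · push_cast; split_ifs <;> omega
      · intro s _ hs; rw [if_neg]; omega
      · intro hh; simp only [Finset.mem_Icc] at hh; rw [if_neg]; omega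
    rw [e1, e2]
    split_ifs <;> omega
  simp only [key, Finset.sum_add_distrib, Finset.sum_ite_eq]
  split_ifs <;> simp_all

open Classical in
theorem cost_ftil (n : ℕ) (a : ℤ → ℤ → ℤ) (ha : IsLusztig n a) (i : ℕ) (hi1 : 1 ≤ i)
    (hi : i ≤ n) (K : Finset ℕ) (c : ℕ → ℕ → ℤ) (hc : IsKTab K c) (E : ℕ)
    (hE : lfStar n a i = i + E) :
    -colSum (ftilStar n a i) K + tabSum (ftilStar n a i) K c = -colSum a K + tabSum a K c
      + (if Occ K c (E + 1) i then 1 else 0) - (if Occ K c E ((i : ℤ) + 1) then 1 else 0) := by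
  rw [colSum_ftil n a ha i hi1 hi]
  have e1 := tab_count hc (E + 1) i (by omega)
  have e0 : tabSum (ftilStar n a i) K c = tabSum a K c
      + (if Occ K c (E + 1) i then 1 else 0)
      - ∑ p ∈ Finset.Icc 1 K.card, ∑ q ∈ Finset.Icc (p + 1) K.card,
      (if c p q = (i : ℤ) + 1 ∧ c p q + ((q : ℤ) - (p : ℤ)) = (lfStar n a i : ℤ) + 1 ∧
        (i : ℤ) < (lfStar n a i : ℤ) then (1 : ℤ) else 0) := by
    rw [← e1]
    unfold tabSum
    simp only [ftil_eq, Finset.sum_sub_distrib, Finset.sum_add_distrib, hE]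
    push_cast
    simp only [add_assoc]
  rw [e0]
  by_cases h0 : E = 0
  · have e2 := Occ_zero hc (i + 1)
    push_cast at e2
    subst h0
    simp only [e2, hE]
    simp
    split_ifs <;> omega
  · have e2 := tab_count hc E ((i : ℤ) + 1) (by omega)
    rw [if_neg (by omega), ← e2, hE]
    have : (i : ℤ) < ((i + E : ℕ) : ℤ) := by omega
    simp only [this, and_true]
    push_cast
    simp only [add_right_comm]
    ring

/-- Changing row `p0` from value `u` to value `w` on columns `[p0+e, p0+e+m)`. -/
theorem tabSum_move (a : ℤ → ℤ → ℤ) (K : Finset ℕ) (c c' : ℕ → ℕ → ℤ) (p0 e m : ℕ)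
    (u w : ℤ) (hp : 1 ≤ p0) (he : 1 ≤ e) (hm : p0 + e + m ≤ K.card + 1)
    (hu : ∀ j < m, c p0 (p0 + e + j) = u)
    (hc' : ∀ p q, c' p q = if p = p0 ∧ p0 + e ≤ q ∧ q < p0 + e + m then w else c p q) :
    tabSum a K c' = tabSum a K c +
      ∑ j ∈ Finset.range m, (a w (w + (e + j)) - a u (u + (e + j))) := by
  by_cases hm0 : m = 0
  · have : c' = c := by
      funext p q; rw [hc', if_neg]; omega
    simp [hm0, this]
  have hp0 : p0 ∈ Finset.Icc 1 K.card := by simp only [Finset.mem_Icc]; omega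
  rw [← sub_eq_iff_eq_add']
  unfold tabSum
  rw [← Finset.sum_sub_distrib, Finset.sum_eq_single_of_mem p0 hp0]
  · rw [← Finset.sum_sub_distrib]
    have hsub : (Finset.range m).image (fun j => p0 + e + j) ⊆ Finset.Icc (p0 + 1) K.card := by
      intro q hq
      simp only [Finset.mem_image, Finset.mem_range, Finset.mem_Icc] at hq ⊢
      omega
    rw [← Finset.sum_subset hsub, Finset.sum_image]
    · apply Finset.sum_congr rfl
      intro j hj
      rw [Finset.mem_range] at hj
      rw [hc', if_pos (by omega), hu j hj]
      push_cast
      ring_nf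
    · intro x _ y _ h; simpa using h
    · intro q hq hq'
      rw [hc', if_neg, sub_self]
      rintro ⟨-, h1, h2⟩
      apply hq'
      simp only [Finset.mem_image, Finset.mem_range]
      exact ⟨q - (p0 + e), by omega, by omega⟩
  · intro p _ hne
    rw [← Finset.sum_sub_distrib]
    apply Finset.sum_eq_zero
    intro q _
    rw [hc', if_neg, sub_self]
    exact fun h => hne h.1

theorem move_up (n : ℕ) (a : ℤ → ℤ → ℤ) (ha : IsLusztig n a) (i : ℕ)
    (hi : i ≤ n) (K : Finset ℕ) (hK : i ∈ K ∨ i + 1 ∉ K) (c : ℕ → ℕ → ℤ) (hc : IsKTab K c)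
    (E : ℕ) (hE : lfStar n a i = i + E) (hX : ¬ Occ K c (E + 1) i)
    (hY : Occ K c E ((i : ℤ) + 1)) :
    ∃ c', IsKTab K c' ∧ tabSum a K c' ≤ tabSum a K c - 1 := by
  obtain ⟨-, -, -, h4⟩ := lf_spec n a ha i hi
  obtain ⟨p0, hp0, hpE, hv⟩ := hY
  -- the row above stays below `i`
  have habove : ∀ p q, 1 ≤ p → p + 1 = p0 → p ≤ q → q ≤ p0 + E → c p q < i := by
    intro p q h1 h2 h3 h5
    subst h2
    have e1 := hc.2.2 p (p + 1 + E) h1 (by omega) (by omega)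
    have e2 := tab_row hc h1 h3 h5 (by omega)
    have e3 : c p (p + 1 + E) ≠ i := by
      intro h
      exact hX ⟨p, h1, by omega, by rw [← h]; congr 1; omega⟩
    omega
  have hdiag : c p0 p0 ≠ (i : ℤ) + 1 := by
    intro h
    rw [hc.1 p0 hp0 (by omega)] at h
    have hk : kth K p0 = i + 1 := by exact_mod_cast h
    have hiK : i ∈ K := by
      rcases hK with h | h
      · exact h
      · exact absurd ((kth_mem_iff K _).2 ⟨p0, hp0, by omega, hk⟩) h
    obtain ⟨r, hr1, hr2, hr⟩ := (kth_mem_iff K _).1 hiK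
    have hlt : r < p0 := by
      rcases lt_trichotomy r p0 with h' | h' | h'
      · exact h'
      · subst h'; omega
      · have := kth_lt K hp0 h' hr2; omega
    have hr' : r + 1 = p0 := by
      by_contra hne
      have e1 := kth_lt K hr1 (Nat.lt_succ_self r) (by omega)
      have e2 := kth_lt K (p := r + 1) (q := p0) (by omega) (by omega) (by omega)
      simp only [Nat.succ_eq_add_one] at e1
      omega
    have := habove r r hr1 hr' le_rfl (by omega)
    rw [hc.1 r hr1 hr2] at this
    omega
  have hex : ∃ e, c p0 (p0 + e) = (i : ℤ) + 1 := ⟨E, hv⟩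
  classical
  obtain ⟨e, hev, hemin⟩ : ∃ e, c p0 (p0 + e) = (i : ℤ) + 1 ∧
      ∀ e' < e, c p0 (p0 + e') ≠ (i : ℤ) + 1 :=
    ⟨Nat.find hex, Nat.find_spec hex, fun e' h => Nat.find_min hex h⟩
  have heE : e ≤ E := by
    by_contra h
    exact hemin E (by omega) hv
  have he1 : 1 ≤ e := by
    rcases Nat.eq_zero_or_pos e with h | h
    · subst h; exact absurd hev hdiag
    · exact h
  obtain ⟨m, rfl⟩ : ∃ m, E = e + m := ⟨E - e, by omega⟩
  have hmid : ∀ q, p0 + e ≤ q → q ≤ p0 + e + m → c p0 q = (i : ℤ) + 1 := by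
    intro q h1 h2
    have e1 := tab_row hc hp0 (by omega) h1 (by omega)
    have e2 := tab_row hc hp0 (by omega) h2 (by omega)
    rw [add_assoc] at e2
    omega
  set c' : ℕ → ℕ → ℤ := fun p q =>
    if p = p0 ∧ p0 + e ≤ q ∧ q < p0 + e + (m + 1) then (i : ℤ) else c p q with hc'
  refine ⟨c', ⟨?_, ?_, ?_⟩, ?_⟩
  · intro p h1 h2
    simp only [hc']
    rw [if_neg (by omega)]
    exact hc.1 p h1 h2
  · intro p q h1 h2 h3
    have e0 := hc.2.1 p q h1 h2 h3
    simp only [hc']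
    split_ifs with g1 g2 g2
    · exact le_rfl
    · obtain ⟨rfl, g3, g4⟩ := g1
      have := hmid q g3 (by omega)
      omega
    · obtain ⟨rfl, g3, g4⟩ := g2
      have := hmid (q + 1) g3 (by omega)
      have g5 := hemin (q - p) (by omega)
      rw [show p + (q - p) = q by omega] at g5
      omega
    · exact e0
  · intro p q h1 h2 h3
    have e0 := hc.2.2 p q h1 h2 h3
    simp only [hc']
    split_ifs with g1 g2 g2
    · omega
    · obtain ⟨rfl, g3, g4⟩ := g1
      have := hmid q g3 (by omega)
      omega
    · obtain ⟨g2, g3, g4⟩ := g2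
      exact habove p q h1 g2 (by omega) (by omega)
    · exact e0
  · rw [tabSum_move a K c c' p0 e (m + 1) ((i : ℤ) + 1) i hp0 he1 (by omega)
      (fun j hj => hmid _ (by omega) (by omega)) (fun p q => rfl)]
    have h5 := Astar_sum n a ha i (i + e - 1) (m + 1)
    have h6 := h4 (i + e - 1) (by omega) (by omega)
    rw [show i + e - 1 + (m + 1) = i + (e + m) by omega, ← hE] at h5
    have h7 : ∑ j ∈ Finset.range (m + 1), (a (i : ℤ) ((i : ℤ) + (e + j))
        - a ((i : ℤ) + 1) ((i : ℤ) + 1 + (e + j))) =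
        ∑ j ∈ Finset.range (m + 1), (a i (((i + e - 1 : ℕ) : ℤ) + 1 + j)
          - a ((i : ℤ) + 1) (((i + e - 1 : ℕ) : ℤ) + 1 + j + 1)) := by
      apply Finset.sum_congr rfl
      intro j _
      have : ((i + e - 1 : ℕ) : ℤ) = i + e - 1 := by omega
      rw [this]
      ring_nf
    rw [h7, h5]
    omega

theorem move_down (n : ℕ) (a : ℤ → ℤ → ℤ) (ha : IsLusztig n a) (i : ℕ)
    (hi : i ≤ n) (K : Finset ℕ) (c : ℕ → ℕ → ℤ) (hc : IsKTab K c)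
    (E : ℕ) (hE : lfStar n a i = i + E) (hX : Occ K c (E + 1) i)
    (hY : ¬ Occ K c E ((i : ℤ) + 1)) :
    ∃ c', IsKTab K c' ∧ tabSum a K c' ≤ tabSum a K c ∧ ¬ Occ K c' (E + 1) i := by
  obtain ⟨-, -, h3, -⟩ := lf_spec n a ha i hi
  obtain ⟨p0, hp0, hpE, hv⟩ := hX
  have hbelow : ∀ q, p0 + (E + 1) ≤ q → q ≤ K.card → (i : ℤ) + 1 < c (p0 + 1) q := by
    intro q h1 h2
    have e1 := hc.2.2 p0 (p0 + (E + 1)) hp0 (by omega) (by omega)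
    have e2 := tab_row hc (by omega : 1 ≤ p0 + 1) (by omega) h1 h2
    have e3 : c (p0 + 1) (p0 + (E + 1)) ≠ (i : ℤ) + 1 := by
      intro h
      exact hY ⟨p0 + 1, by omega, by omega, by rw [← h]; congr 1; omega⟩
    omega
  -- the length of the run of `i`
  have hex : ∃ m, K.card < p0 + (E + 1) + m ∨ c p0 (p0 + (E + 1) + m) ≠ i :=
    ⟨K.card, Or.inl (by omega)⟩
  classical
  obtain ⟨m, hmv, hmmin⟩ : ∃ m, (K.card < p0 + (E + 1) + m ∨ c p0 (p0 + (E + 1) + m) ≠ i) ∧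
      ∀ m' < m, ¬ (K.card < p0 + (E + 1) + m' ∨ c p0 (p0 + (E + 1) + m') ≠ i) :=
    ⟨Nat.find hex, Nat.find_spec hex, fun e' h => Nat.find_min hex h⟩
  have hm1 : 1 ≤ m := by
    rcases Nat.eq_zero_or_pos m with h | h
    · subst h
      rcases hmv with h | h
      · omega
      · exact absurd hv h
    · exact h
  have hmK : p0 + (E + 1) + m ≤ K.card + 1 := by
    have := hmmin (m - 1) (by omega)
    push Not at this
    omega
  have hmid : ∀ q, p0 + (E + 1) ≤ q → q < p0 + (E + 1) + m → c p0 q = i := by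
    intro q h1 h2
    have := hmmin (q - (p0 + (E + 1))) (by omega)
    push Not at this
    have h := this.2
    rwa [show p0 + (E + 1) + (q - (p0 + (E + 1))) = q by omega] at h
  set c' : ℕ → ℕ → ℤ := fun p q =>
    if p = p0 ∧ p0 + (E + 1) ≤ q ∧ q < p0 + (E + 1) + m then (i : ℤ) + 1 else c p q with hc'
  refine ⟨c', ⟨?_, ?_, ?_⟩, ?_, ?_⟩
  · intro p h1 h2
    simp only [hc']
    rw [if_neg (by omega)]
    exact hc.1 p h1 h2
  · intro p q h1 h2 h3
    have e0 := hc.2.1 p q h1 h2 h3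
    simp only [hc']
    split_ifs with g1 g2 g2
    · exact le_rfl
    · obtain ⟨rfl, g3, g4⟩ := g1
      have g5 := hmid q g3 (by omega)
      have g6 : q + 1 = p + (E + 1) + m := by omega
      rw [← g6] at hmv
      rcases hmv with h | h <;> omega
    · obtain ⟨rfl, g3, g4⟩ := g2
      have := hmid (q + 1) g3 (by omega)
      omega
    · exact e0
  · intro p q h1 h2 h3
    have e0 := hc.2.2 p q h1 h2 h3
    simp only [hc']
    split_ifs with g1 g2 g2
    · omega
    · obtain ⟨rfl, g3, g4⟩ := g1
      exact hbelow q g3 h3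
    · obtain ⟨g2, g3, g4⟩ := g2
      have := hmid q g3 g4
      rw [g2] at e0
      omega
    · exact e0
  · rw [tabSum_move a K c c' p0 (E + 1) m i ((i : ℤ) + 1) hp0 (by omega) (by omega)
      (fun j hj => hmid _ (by omega) (by omega)) (fun p q => rfl)]
    have h5 := Astar_sum n a ha i (i + E) m
    have h6 := h3 (i + E + m) (by omega)
    rw [hE] at h6
    have h7 : ∑ j ∈ Finset.range m, (a ((i : ℤ) + 1) ((i : ℤ) + 1 + (((E + 1 : ℕ) : ℤ) + j))
        - a (i : ℤ) ((i : ℤ) + (((E + 1 : ℕ) : ℤ) + j))) =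
        -∑ j ∈ Finset.range m, (a i (((i + E : ℕ) : ℤ) + 1 + j)
          - a ((i : ℤ) + 1) (((i + E : ℕ) : ℤ) + 1 + j + 1)) := by
      rw [← Finset.sum_neg_distrib]
      apply Finset.sum_congr rfl
      intro j _
      push_cast
      ring_nf
    rw [h7, h5]
    omega
  · rintro ⟨r, hr1, hr2, hr⟩
    simp only [hc'] at hr
    by_cases h : r = p0
    · subst h
      rw [if_pos (by omega)] at hr
      omega
    · rw [if_neg (by omega)] at hr
      exact h (tab_uniq hc hr1 hp0 hr2 hpE (by rw [hr, hv]))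

theorem inf_le (a b : ℤ → ℤ → ℤ) (ha : ∀ k l, 0 ≤ a k l) (hb : ∀ k l, 0 ≤ b k l)
    (K : Finset ℕ) (x y : ℤ)
    (h : ∀ c, IsKTab K c → ∃ c', IsKTab K c' ∧ x + tabSum a K c' ≤ y + tabSum b K c) :
    x + sInf {z : ℤ | ∃ c : ℕ → ℕ → ℤ, IsKTab K c ∧ z = tabSum a K c} ≤
      y + sInf {z : ℤ | ∃ c : ℕ → ℕ → ℤ, IsKTab K c ∧ z = tabSum b K c} := by
  have hbd : ∀ d : ℤ → ℤ → ℤ, (∀ k l, 0 ≤ d k l) →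
      BddBelow {z : ℤ | ∃ c : ℕ → ℕ → ℤ, IsKTab K c ∧ z = tabSum d K c} := by
    intro d hd
    refine ⟨0, ?_⟩
    rintro z ⟨c, _, rfl⟩
    exact tabSum_nonneg d hd K c
  obtain ⟨c, hc, hz⟩ := Int.csInf_mem
    (s := {z : ℤ | ∃ c : ℕ → ℕ → ℤ, IsKTab K c ∧ z = tabSum b K c})
    ⟨_, _, tab_nonempty K, rfl⟩ (hbd b hb)
  rw [hz]
  obtain ⟨c', hc', hle⟩ := h c hc
  have := csInf_le (hbd a ha) ⟨c', hc', rfl⟩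
  omega

/-- for every Lusztig datum `a` and `1 ≤ i ≤ n`:
`M_K(f̃_i^* a) = M_K(a)` for every `K ∈ M_n^×` with `i ∈ K` or `i+1 ∉ K`, and
`M_{[i+1,n+1]}(f̃_i^* a) = M_{[i+1,n+1]}(a) − 1`.  (Hence `Ψ` intertwines `f̃_i^*` on `ℬ`
with the lowering Kashiwara operator on `e`-BZ data.) -/
theorem stmt14 (n : ℕ) (hn : 1 ≤ n) (a : ℤ → ℤ → ℤ) (ha : IsLusztig n a)
    (i : ℕ) (hi1 : 1 ≤ i) (hi2 : i ≤ n) :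
    (∀ K : Finset ℕ, K ⊆ Finset.Icc 1 (n + 1) → K ≠ ∅ → K ≠ Finset.Icc 1 (n + 1) →
      (i ∈ K ∨ i + 1 ∉ K) → MK n (ftilStar n a i) K = MK n a K) ∧
    MK n (ftilStar n a i) (Finset.Icc (i + 1) (n + 1)) =
      MK n a (Finset.Icc (i + 1) (n + 1)) - 1 := by
  obtain ⟨hl1, hl2, -, -⟩ := lf_spec n a ha i hi2
  obtain ⟨E, hE⟩ : ∃ E, lfStar n a i = i + E := ⟨lfStar n a i - i, by omega⟩
  have hfn := ftil_nonneg n a ha i hi2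
  have cf := fun K c hc => cost_ftil n a ha i hi1 hi2 K c hc E hE
  constructor
  · intro K _ hK1 hK2 hK
    unfold MK
    rw [if_neg (by tauto), if_neg (by tauto)]
    apply le_antisymm
    · apply inf_le _ _ hfn ha.1
      intro c hc
      have e := cf K c hc
      by_cases h : Occ K c (E + 1) i ∧ ¬ Occ K c E ((i : ℤ) + 1)
      · obtain ⟨c', hc', h1, h2⟩ := move_down n a ha i hi2 K c hc E hE h.1 h.2
        refine ⟨c', hc', ?_⟩
        have e' := cf K c' hc'
        rw [if_neg h2] at e'
        change -colSum _ K + _ ≤ -colSum _ K + _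
        split_ifs at e' <;> omega
      · refine ⟨c, hc, ?_⟩
        change -colSum _ K + _ ≤ -colSum _ K + _
        rw [e]
        split_ifs <;> first | omega | tauto
    · apply inf_le _ _ ha.1 hfn
      intro c hc
      have e := cf K c hc
      by_cases h : ¬ Occ K c (E + 1) i ∧ Occ K c E ((i : ℤ) + 1)
      · obtain ⟨c', hc', h1⟩ := move_up n a ha i hi2 K hK c hc E hE h.1 h.2
        refine ⟨c', hc', ?_⟩
        rw [if_neg h.1, if_pos h.2] at e
        change -colSum _ K + _ ≤ -colSum _ K + _
        omega
      · refine ⟨c, hc, ?_⟩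
        change -colSum _ K + _ ≤ -colSum _ K + _
        rw [e]
        split_ifs <;> first | omega | tauto
  · set K := Finset.Icc (i + 1) (n + 1) with hK
    have hcard : K.card = n + 1 - i := by rw [hK, Nat.card_Icc]; omega
    have hN : ¬ (K = ∅ ∨ K = Finset.Icc 1 (n + 1)) := by
      rintro (h | h)
      · rw [h] at hcard; simp at hcard; omega
      · rw [h, Nat.card_Icc] at hcard; omega
    have hge : ∀ p, 1 ≤ p → p ≤ K.card → i + p ≤ kth K p := by
      intro p h1 h2
      induction p, h1 using Nat.le_induction with
      | base =>
        have := (kth_mem_iff K _).2 ⟨1, le_rfl, h2, rfl⟩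
        rw [hK, Finset.mem_Icc] at this
        exact this.1
      | succ p hp ih =>
        have := kth_lt K hp (Nat.lt_succ_self p) h2
        have := ih (by omega)
        simp only [Nat.succ_eq_add_one] at *
        omega
    have hle : kth K K.card ≤ n + 1 := by
      have := (kth_mem_iff K _).2 ⟨K.card, by omega, le_rfl, rfl⟩
      conv at this => rw [hK]
      rw [Finset.mem_Icc] at this
      exact this.2
    have hocc : ∀ c, IsKTab K c → ¬ Occ K c (E + 1) i ∧ Occ K c E ((i : ℤ) + 1) := by
      intro c hc
      have hge' : ∀ p q, 1 ≤ p → p ≤ q → q ≤ K.card → (i : ℤ) + p ≤ c p q := by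
        intro p q h1 h2 h3
        have e1 := tab_row hc h1 le_rfl h2 h3
        rw [hc.1 p h1 (by omega)] at e1
        have := hge p h1 (by omega)
        omega
      constructor
      · rintro ⟨p, h1, h2, h3⟩
        have := hge' p (p + (E + 1)) h1 (by omega) h2
        omega
      · refine ⟨1, le_rfl, by omega, ?_⟩
        apply le_antisymm
        · have e1 := tab_row hc (p := 1) (q := 1 + E) (r := K.card) le_rfl (by omega)
            (by omega) le_rfl
          have e2 : ∀ j, 1 + j ≤ K.card → c 1 K.card + j ≤ c (1 + j) K.card := by
            intro j
            induction j with
            | zero => simp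
            | succ j ih =>
              intro hj
              have := ih (by omega)
              have := hc.2.2 (1 + j) K.card (by omega) (by omega) le_rfl
              rw [add_assoc] at this
              push_cast
              omega
          have e3 := e2 (K.card - 1) (by omega)
          rw [show 1 + (K.card - 1) = K.card by omega, hc.1 K.card (by omega) le_rfl] at e3
          omega
        · simpa using hge' 1 (1 + E) le_rfl (by omega) (by omega)
    have cf' : ∀ c, IsKTab K c → -colSum (ftilStar n a i) K + tabSum (ftilStar n a i) K c
        = -colSum a K + tabSum a K c - 1 := by
      intro c hc
      have e := cf K c hc
      rw [if_neg (hocc c hc).1, if_pos (hocc c hc).2] at e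
      omega
    unfold MK
    rw [if_neg hN, if_neg hN]
    change -colSum _ K + _ = -colSum _ K + _ - 1
    have g1 := inf_le (ftilStar n a i) a hfn ha.1 K (-colSum (ftilStar n a i) K)
      (-colSum a K - 1) (fun c hc => ⟨c, hc, by have := cf' c hc; omega⟩)
    have g2 := inf_le a (ftilStar n a i) ha.1 hfn K (-colSum a K - 1)
      (-colSum (ftilStar n a i) K) (fun c hc => ⟨c, hc, by have := cf' c hc; omega⟩)
    omega
end

section
/- (Anderson–Mirkovi\u0107 conjecture, type A, in terms of Lusztig data.) For every Lusztig datum a ∈ ℬ, every 1 ≤ i ≤ n, and every K ∈ M_n^× with i ∉ K and i+1 ∈ K, one has M_K(f̃_i^* a) = min{ M_K(a), M_{s_iK}(a) + c_i^*(a) }, where s_iK = (K ∖ {i+1}) ∪ {i} and c_i^*(a) = M_{[i+1,n+1]}(a) − M_{{i}∪[i+2,n+1]}(a) − 1. -/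
/-- The shape conditions of a tableau. -/
def Tb (L : ℕ) (c : ℕ → ℕ → ℤ) : Prop :=
  (∀ p q : ℕ, 1 ≤ p → p ≤ q → q + 1 ≤ L → c p q ≤ c p (q + 1)) ∧
  (∀ p q : ℕ, 1 ≤ p → p + 1 ≤ q → q ≤ L → c p q < c (p + 1) q)

/-- `v` occurs on the `d`-th diagonal. -/
def Oc (L : ℕ) (c : ℕ → ℕ → ℤ) (d : ℕ) (v : ℤ) : Prop :=
  ∃ p : ℕ, 1 ≤ p ∧ p + d ≤ L ∧ c p (p + d) = v

lemma Tb.diag_succ {L : ℕ} {c : ℕ → ℕ → ℤ} (h : Tb L c) (d p : ℕ) (hp : 1 ≤ p)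
    (hL : p + 1 + d ≤ L) : c p (p + d) < c (p + 1) (p + 1 + d) := by
  have h1 := h.1 p (p + d) hp (by omega) (by omega)
  have h2 := h.2 p (p + d + 1) hp (by omega) (by omega)
  have e : p + 1 + d = p + d + 1 := by omega
  rw [e]; omega

lemma Tb.diag_add {L : ℕ} {c : ℕ → ℕ → ℤ} (h : Tb L c) (d p j : ℕ) (hp : 1 ≤ p)
    (hL : p + j + d ≤ L) : c p (p + d) + j ≤ c (p + j) (p + j + d) := by
  induction j with
  | zero => simp
  | succ j ih =>
    have h1 := ih (by omega)
    have h2 := h.diag_succ d (p + j) (by omega) (by omega)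
    have e : p + (j + 1) = p + j + 1 := by omega
    rw [e]; push_cast; omega

lemma Tb.col_add {L : ℕ} {c : ℕ → ℕ → ℤ} (h : Tb L c) (p q j : ℕ) (hp : 1 ≤ p)
    (hq : p + j ≤ q) (hL : q ≤ L) : c p q + j ≤ c (p + j) q := by
  induction j with
  | zero => simp
  | succ j ih =>
    have h1 := ih (by omega)
    have h2 := h.2 (p + j) q (by omega) (by omega) (by omega)
    have e : p + (j + 1) = p + j + 1 := by omega
    rw [e]; push_cast; omega

lemma Tb.row_mono {L : ℕ} {c : ℕ → ℕ → ℤ} (h : Tb L c) (p d : ℕ) (hp : 1 ≤ p)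
    (hL : p + d ≤ L) : c p p ≤ c p (p + d) := by
  induction d with
  | zero => simp
  | succ j ih =>
    have h1 := ih (by omega)
    have h2 := h.1 p (p + j) (by omega) (by omega) (by omega)
    have e : p + (j + 1) = p + j + 1 := by omega
    rw [e]; omega

lemma Tb.adj {L : ℕ} {c : ℕ → ℕ → ℤ} (h : Tb L c) (d p r : ℕ) (i : ℤ) (hp : 1 ≤ p) (hr : 1 ≤ r)
    (hpL : p + d ≤ L) (hrL : r + d ≤ L) (h1 : c p (p + d) = i) (h2 : c r (r + d) = i + 1) :
    r = p + 1 := by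
  rcases Nat.lt_or_ge p r with hlt | hge
  · obtain ⟨j, rfl⟩ := Nat.exists_eq_add_of_le hlt.le
    have := h.diag_add d p j hp (by omega)
    omega
  · obtain ⟨j, rfl⟩ := Nat.exists_eq_add_of_le hge
    have := h.diag_add d r j hr (by omega)
    omega

lemma Tb.inj {L : ℕ} {c : ℕ → ℕ → ℤ} (h : Tb L c) (d p r : ℕ) (hp : 1 ≤ p) (hr : 1 ≤ r)
    (hpL : p + d ≤ L) (hrL : r + d ≤ L) (h1 : c p (p + d) = c r (r + d)) : r = p := by
  rcases Nat.lt_or_ge p r with hlt | hge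
  · obtain ⟨j, rfl⟩ := Nat.exists_eq_add_of_le hlt.le
    have := h.diag_add d p j hp (by omega)
    omega
  · obtain ⟨j, rfl⟩ := Nat.exists_eq_add_of_le hge
    have := h.diag_add d r j hr (by omega)
    omega

lemma Tb.force_up {L : ℕ} {c : ℕ → ℕ → ℤ} (h : Tb L c) (d : ℕ) (i : ℤ)
    (h1 : Oc L c d i) (h2 : Oc L c d (i + 1)) : Oc L c (d + 1) i := by
  obtain ⟨p, hp, hpL, e1⟩ := h1
  obtain ⟨r, hr, hrL, e2⟩ := h2
  obtain rfl := h.adj d p r i hp hr hpL hrL e1 e2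
  refine ⟨p, hp, by omega, ?_⟩
  have h3 := h.1 p (p + d) hp (by omega) (by omega)
  have h4 := h.2 p (p + d + 1) hp (by omega) (by omega)
  have e : p + 1 + d = p + d + 1 := by omega
  rw [e] at e2
  have e' : p + (d + 1) = p + d + 1 := by omega
  rw [e']; omega

lemma Tb.force_down {L : ℕ} {c : ℕ → ℕ → ℤ} (h : Tb L c) (d : ℕ) (i : ℤ)
    (h1 : Oc L c (d + 1) i) (h2 : Oc L c (d + 1) (i + 1)) : Oc L c d (i + 1) := by
  obtain ⟨p, hp, hpL, e1⟩ := h1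
  obtain ⟨r, hr, hrL, e2⟩ := h2
  obtain rfl := h.adj (d + 1) p r i hp hr hpL hrL e1 e2
  refine ⟨p + 1, by omega, by omega, ?_⟩
  have h3 := h.1 (p + 1) (p + 1 + d) (by omega) (by omega) (by omega)
  have h4 := h.2 p (p + 1 + d) hp (by omega) (by omega)
  have e : p + 1 + (d + 1) = p + 1 + d + 1 := by omega
  rw [e] at e2
  have e' : p + (d + 1) = p + 1 + d := by omega
  rw [e'] at e1; omega

/-- Swap `i` and `i+1` on the diagonals `d0..m`. -/
def mv (i : ℤ) (d0 m : ℕ) (c : ℕ → ℕ → ℤ) : ℕ → ℕ → ℤ := fun p q =>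
  if p + d0 ≤ q ∧ q ≤ p + m then Equiv.swap i (i + 1) (c p q) else c p q

lemma sw_cases (i v : ℤ) : (v = i ∧ Equiv.swap i (i + 1) v = i + 1) ∨
    (v = i + 1 ∧ Equiv.swap i (i + 1) v = i) ∨
    (v ≠ i ∧ v ≠ i + 1 ∧ Equiv.swap i (i + 1) v = v) := by
  rw [Equiv.swap_apply_def]; split_ifs <;> omega

lemma Tb.mv {L : ℕ} {c : ℕ → ℕ → ℤ} (h : Tb L c) (i : ℤ) (d0 m : ℕ)
    (hst : (∀ d, d0 ≤ d → d ≤ m → ¬ Oc L c d i) ∨ (∀ d, d0 ≤ d → d ≤ m → ¬ Oc L c d (i + 1)))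
    (hm : ¬ Oc L c (m + 1) i) (hd : ∀ e, e + 1 = d0 → ¬ Oc L c e (i + 1)) :
    Tb L (mv i d0 m c) := by
  have key : ∀ p q v, 1 ≤ p → p ≤ q → q ≤ L → ¬ Oc L c (q - p) v → c p q ≠ v := by
    intro p q v h1 h2 h3 hO e
    apply hO
    refine ⟨p, h1, by omega, ?_⟩
    rw [← e]; congr 1; omega
  constructor
  · intro p q hp hpq hq
    have h1 := h.1 p q hp hpq hq
    have k1 := fun v => key p q v hp hpq (by omega)
    have k2 := fun v => key p (q + 1) v hp (by omega) (by omega)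
    unfold _root_.mv
    by_cases r1 : p + d0 ≤ q ∧ q ≤ p + m <;> by_cases r2 : p + d0 ≤ q + 1 ∧ q + 1 ≤ p + m
    · rw [if_pos r1, if_pos r2]
      rcases hst with hst | hst
      · have a1 := k1 _ (hst (q - p) (by omega) (by omega))
        have a2 := k2 _ (hst (q + 1 - p) (by omega) (by omega))
        rcases sw_cases i (c p q) with b | b | b <;> rcases sw_cases i (c p (q + 1)) with b' | b' | b' <;> omega
      · have a1 := k1 _ (hst (q - p) (by omega) (by omega))
        have a2 := k2 _ (hst (q + 1 - p) (by omega) (by omega))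
        rcases sw_cases i (c p q) with b | b | b <;> rcases sw_cases i (c p (q + 1)) with b' | b' | b' <;> omega
    · rw [if_pos r1, if_neg r2]
      have e : q + 1 - p = m + 1 := by omega
      have a2 := k2 i (by rw [e]; exact hm)
      rcases sw_cases i (c p q) with b | b | b <;> omega
    · rw [if_neg r1, if_pos r2]
      have a1 := k1 (i + 1) (hd _ (by omega))
      rcases sw_cases i (c p (q + 1)) with b | b | b <;> omega
    · rw [if_neg r1, if_neg r2]; exact h1
  · intro p q hp hpq hq
    have h1 := h.2 p q hp hpq hq
    have k1 := fun v => key p q v hp (by omega) (by omega)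
    have k2 := fun v => key (p + 1) q v (by omega) (by omega) (by omega)
    unfold _root_.mv
    by_cases r1 : p + d0 ≤ q ∧ q ≤ p + m <;> by_cases r2 : p + 1 + d0 ≤ q ∧ q ≤ p + 1 + m
    · rw [if_pos r1, if_pos r2]
      rcases hst with hst | hst
      · have a1 := k1 _ (hst (q - p) (by omega) (by omega))
        have a2 := k2 _ (hst (q - (p + 1)) (by omega) (by omega))
        rcases sw_cases i (c p q) with b | b | b <;> rcases sw_cases i (c (p + 1) q) with b' | b' | b' <;> omega
      · have a1 := k1 _ (hst (q - p) (by omega) (by omega))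
        have a2 := k2 _ (hst (q - (p + 1)) (by omega) (by omega))
        rcases sw_cases i (c p q) with b | b | b <;> rcases sw_cases i (c (p + 1) q) with b' | b' | b' <;> omega
    · rw [if_pos r1, if_neg r2]
      have a2 := k2 (i + 1) (hd _ (by omega))
      rcases sw_cases i (c p q) with b | b | b <;> omega
    · rw [if_neg r1, if_pos r2]
      have e : q - p = m + 1 := by omega
      have a1 := k1 i (by rw [e]; exact hm)
      rcases sw_cases i (c (p + 1) q) with b | b | b <;> omega
    · rw [if_neg r1, if_neg r2]; exact h1

lemma Oc_mv (L : ℕ) (c : ℕ → ℕ → ℤ) (i : ℤ) (d0 m d : ℕ) (v : ℤ) :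
    Oc L (mv i d0 m c) d v ↔
      if d0 ≤ d ∧ d ≤ m then Oc L c d (Equiv.swap i (i + 1) v) else Oc L c d v := by
  unfold Oc mv
  split_ifs with h
  · refine exists_congr fun p => ?_
    rw [if_pos (by omega)]
    constructor
    · rintro ⟨h1, h2, rfl⟩
      exact ⟨h1, h2, by simp⟩
    · rintro ⟨h1, h2, h3⟩
      exact ⟨h1, h2, by rw [h3]; simp⟩
  · refine exists_congr fun p => ?_
    rw [if_neg (by omega)]

lemma up_run {L : ℕ} {c : ℕ → ℕ → ℤ} (h : Tb L c) (i : ℤ) (s : ℕ) (h1 : Oc L c s i)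
    (h2 : ¬ Oc L c s (i + 1)) : ∃ d1, s ≤ d1 ∧ (∀ d, s ≤ d → d ≤ d1 → Oc L c d i) ∧
      (∀ d, s ≤ d → d ≤ d1 → ¬ Oc L c d (i + 1)) ∧ ¬ Oc L c (d1 + 1) i := by
  obtain ⟨k, hk⟩ : ∃ k, k = L - s := ⟨_, rfl⟩
  induction k generalizing s with
  | zero => obtain ⟨p, hp, hpL, _⟩ := h1; omega
  | succ k ih =>
    by_cases h3 : Oc L c (s + 1) i
    · obtain ⟨d1, a1, a2, a3, a4⟩ :=
        ih (s + 1) h3 (fun h4 => h2 (h.force_down s i h3 h4)) (by omega)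
      refine ⟨d1, by omega, ?_, ?_, a4⟩
      · intro d hd hd'
        rcases Nat.eq_or_lt_of_le hd with rfl | hlt
        · exact h1
        · exact a2 d hlt hd'
      · intro d hd hd'
        rcases Nat.eq_or_lt_of_le hd with rfl | hlt
        · exact h2
        · exact a3 d hlt hd'
    · refine ⟨s, le_rfl, ?_, ?_, h3⟩ <;> intro d hd hd' <;> obtain rfl := le_antisymm hd hd'
      exacts [h1, h2]

lemma down_run {L : ℕ} {c : ℕ → ℕ → ℤ} (h : Tb L c) (i : ℤ) (m : ℕ) (h1 : Oc L c m (i + 1))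
    (h2 : ¬ Oc L c (m + 1) i) : ∃ d0, d0 ≤ m ∧ (∀ d, d0 ≤ d → d ≤ m → Oc L c d (i + 1)) ∧
      (∀ d, d0 ≤ d → d ≤ m → ¬ Oc L c d i) ∧ (∀ e, e + 1 = d0 → ¬ Oc L c e (i + 1)) := by
  induction m with
  | zero =>
    refine ⟨0, le_rfl, ?_, ?_, by simp⟩ <;> intro d hd hd' <;> obtain rfl := le_antisymm hd hd'
    exacts [h1, fun h3 => h2 (h.force_up 0 i h3 h1)]
  | succ m ih =>
    have h3 : ¬ Oc L c (m + 1) i := fun h3 => h2 (h.force_up _ i h3 h1)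
    by_cases h4 : Oc L c m (i + 1)
    · obtain ⟨d0, a1, a2, a3, a4⟩ := ih h4 h3
      refine ⟨d0, by omega, ?_, ?_, a4⟩
      · intro d hd hd'
        rcases Nat.eq_or_lt_of_le hd' with rfl | hlt
        · exact h1
        · exact a2 d hd (by omega)
      · intro d hd hd'
        rcases Nat.eq_or_lt_of_le hd' with rfl | hlt
        · exact h3
        · exact a3 d hd (by omega)
    · refine ⟨m + 1, le_rfl, ?_, ?_, ?_⟩
      · intro d hd hd'; obtain rfl := le_antisymm hd hd'; exact h1
      · intro d hd hd'; obtain rfl := le_antisymm hd hd'; exact h3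
      · intro e he; obtain rfl : e = m := by omega
        exact h4

/-- Weight by diagonals. -/
def wt (a : ℤ → ℤ → ℤ) (L : ℕ) (c : ℕ → ℕ → ℤ) : ℤ :=
  ∑ d ∈ Finset.Icc 1 L, ∑ p ∈ Finset.Icc 1 (L - d), a (c p (p + d)) (c p (p + d) + d)

lemma tabSum_eq_wt (a : ℤ → ℤ → ℤ) (K : Finset ℕ) (c : ℕ → ℕ → ℤ) :
    tabSum a K c = wt a K.card c := by
  unfold tabSum wt
  rw [Finset.sum_sigma', Finset.sum_sigma']
  refine Finset.sum_bij' (fun x _ => ⟨x.2 - x.1, x.1⟩) (fun x _ => ⟨x.2, x.2 + x.1⟩) ?_ ?_ ?_ ?_ ?_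
  · rintro ⟨p, q⟩ h; simp at h ⊢; omega
  · rintro ⟨p, q⟩ h; simp at h ⊢; omega
  · rintro ⟨p, q⟩ h; simp at h ⊢; omega
  · rintro ⟨p, q⟩ h; simp at h ⊢
  · rintro ⟨p, q⟩ h; simp at h ⊢
    have e : p + (q - p) = q := by omega
    rw [e, Nat.cast_sub (by omega)]

open Classical in
/-- Indicator of occurrence. -/
noncomputable def oc (L : ℕ) (c : ℕ → ℕ → ℤ) (d : ℕ) (v : ℤ) : ℤ := if Oc L c d v then 1 else 0

lemma Tb.cnt {L : ℕ} {c : ℕ → ℕ → ℤ} (h : Tb L c) (d : ℕ) (hd : d ≤ L) (v : ℤ) :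
    ∑ p ∈ Finset.Icc 1 (L - d), (if c p (p + d) = v then (1 : ℤ) else 0) = oc L c d v := by
  unfold oc
  split_ifs with hO
  · obtain ⟨p, hp, hpL, e⟩ := hO
    rw [Finset.sum_eq_single p]
    · rw [if_pos e]
    · intro r hr hne
      rw [Finset.mem_Icc] at hr
      rw [if_neg]
      intro e'
      exact hne (h.inj d p r hp (by omega) (by omega) (by omega) (by omega))
    · intro hn; exfalso; apply hn; rw [Finset.mem_Icc]; omega
  · apply Finset.sum_eq_zero
    intro p hp
    rw [Finset.mem_Icc] at hp
    rw [if_neg]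
    intro e
    exact hO ⟨p, by omega, by omega, e⟩

/-- partial sums -/
def Dp (a : ℤ → ℤ → ℤ) (i : ℤ) (m : ℕ) : ℤ :=
  ∑ d ∈ Finset.Icc 1 m, (a (i + 1) (i + 1 + d) - a i (i + d))

lemma Dp_succ (a : ℤ → ℤ → ℤ) (i : ℤ) (m : ℕ) :
    Dp a i (m + 1) = Dp a i m + (a (i + 1) (i + 1 + (m + 1 : ℕ)) - a i (i + (m + 1 : ℕ))) := by
  unfold Dp
  rw [Finset.sum_Icc_succ_top (by omega)]

lemma Dp_range (a : ℤ → ℤ → ℤ) (i : ℤ) (L d0 m : ℕ) (h : d0 ≤ m) (hm : m ≤ L) :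
    ∑ d ∈ Finset.Icc 1 L, (if d0 ≤ d ∧ d ≤ m then (a (i + 1) (i + 1 + d) - a i (i + d)) else 0)
      = Dp a i m - Dp a i (d0 - 1) := by
  rw [← Finset.sum_filter, eq_sub_iff_add_eq]
  unfold Dp
  rw [← Finset.sum_union]
  · congr 1; ext d; simp; omega
  · rw [Finset.disjoint_left]; intro d; simp; omega

lemma wt_mv (a : ℤ → ℤ → ℤ) {L : ℕ} {c : ℕ → ℕ → ℤ} (h : Tb L c) (i : ℤ) (d0 m : ℕ) :
    wt a L (mv i d0 m c) = wt a L c + ∑ d ∈ Finset.Icc 1 L,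
      (if d0 ≤ d ∧ d ≤ m then
        (a (i + 1) (i + 1 + d) - a i (i + d)) * (oc L c d i - oc L c d (i + 1)) else 0) := by
  unfold wt
  rw [← Finset.sum_add_distrib]
  refine Finset.sum_congr rfl fun d hd => ?_
  rw [Finset.mem_Icc] at hd
  split_ifs with hr
  · rw [← h.cnt d hd.2, ← h.cnt d hd.2, ← Finset.sum_sub_distrib, Finset.mul_sum,
      ← Finset.sum_add_distrib]
    refine Finset.sum_congr rfl fun p _ => ?_
    unfold mv
    rw [if_pos (by omega)]
    rcases sw_cases i (c p (p + d)) with b | b | b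
    · rw [b.2, b.1]; simp
    · rw [b.2, b.1]; simp
    · rw [b.2.2, if_neg b.1, if_neg b.2.1]; simp
  · rw [add_zero]
    refine Finset.sum_congr rfl fun p _ => ?_
    unfold mv
    rw [if_neg (by omega)]

lemma wt_up (a : ℤ → ℤ → ℤ) {L : ℕ} {c : ℕ → ℕ → ℤ} (h : Tb L c) (i : ℤ) (d0 m : ℕ) (hdm : d0 ≤ m)
    (h1 : ∀ d, d0 ≤ d → d ≤ m → Oc L c d i) (h2 : ∀ d, d0 ≤ d → d ≤ m → ¬ Oc L c d (i + 1)) :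
    wt a L (mv i d0 m c) = wt a L c + (Dp a i m - Dp a i (d0 - 1)) := by
  have hm : m ≤ L := by obtain ⟨p, _, hp, _⟩ := h1 m hdm le_rfl; omega
  rw [wt_mv a h, ← Dp_range a i L d0 m hdm hm]
  congr 1
  refine Finset.sum_congr rfl fun d _ => ?_
  split_ifs with hr
  · unfold oc; rw [if_pos (h1 d hr.1 hr.2), if_neg (h2 d hr.1 hr.2)]; ring
  · rfl

lemma wt_down (a : ℤ → ℤ → ℤ) {L : ℕ} {c : ℕ → ℕ → ℤ} (h : Tb L c) (i : ℤ) (d0 m : ℕ)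
    (hdm : d0 ≤ m)
    (h1 : ∀ d, d0 ≤ d → d ≤ m → Oc L c d (i + 1)) (h2 : ∀ d, d0 ≤ d → d ≤ m → ¬ Oc L c d i) :
    wt a L (mv i d0 m c) = wt a L c - (Dp a i m - Dp a i (d0 - 1)) := by
  have hm : m ≤ L := by obtain ⟨p, _, hp, _⟩ := h1 m hdm le_rfl; omega
  rw [wt_mv a h, ← Dp_range a i L d0 m hdm hm, sub_eq_add_neg, ← Finset.sum_neg_distrib]
  congr 1
  refine Finset.sum_congr rfl fun d _ => ?_
  split_ifs with hr
  · unfold oc; rw [if_pos (h1 d hr.1 hr.2), if_neg (h2 d hr.1 hr.2)]; ring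
  · simp

lemma kth_eq (K : Finset ℕ) (j : Fin K.card) : kth K (j + 1) = K.orderEmbOfFin rfl j := by
  unfold kth
  rw [Finset.orderEmbOfFin_apply]
  simp

lemma kth_mem (K : Finset ℕ) (p : ℕ) (hp : 1 ≤ p) (hpL : p ≤ K.card) : kth K p ∈ K := by
  have := kth_eq K ⟨p - 1, by omega⟩
  simp only [Nat.sub_add_cancel hp] at this
  rw [this]; exact Finset.orderEmbOfFin_mem _ _ _

lemma kth_surj (K : Finset ℕ) (k : ℕ) (hk : k ∈ K) : ∃ p, 1 ≤ p ∧ p ≤ K.card ∧ kth K p = k := by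
  have h : k ∈ Set.range (K.orderEmbOfFin rfl) := by rw [Finset.range_orderEmbOfFin]; exact hk
  obtain ⟨j, rfl⟩ := h
  exact ⟨j + 1, by omega, j.2, kth_eq K j⟩

lemma kth_lt_s16 (K : Finset ℕ) (p : ℕ) (hp : 1 ≤ p) (hpL : p + 1 ≤ K.card) :
    kth K p < kth K (p + 1) := by
  have h1 := kth_eq K ⟨p - 1, by omega⟩
  have h2 := kth_eq K ⟨p, by omega⟩
  simp only [Nat.sub_add_cancel hp] at h1
  rw [h1, h2]
  apply (K.orderEmbOfFin rfl).strictMono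
  rw [Fin.lt_def]; simp; omega

lemma isKTab_iff (K : Finset ℕ) (c : ℕ → ℕ → ℤ) : IsKTab K c ↔
    Tb K.card c ∧ ∀ v : ℤ, Oc K.card c 0 v ↔ ∃ k ∈ K, (k : ℤ) = v := by
  constructor
  · rintro ⟨h1, h2, h3⟩
    refine ⟨⟨h2, h3⟩, fun v => ?_⟩
    constructor
    · rintro ⟨p, hp, hpL, e⟩
      exact ⟨kth K p, kth_mem K p hp hpL, by rw [← h1 p hp hpL]; exact e⟩
    · rintro ⟨k, hk, rfl⟩
      obtain ⟨p, hp, hpL, rfl⟩ := kth_surj K k hk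
      exact ⟨p, hp, hpL, h1 p hp hpL⟩
  · rintro ⟨h, hO⟩
    refine ⟨?_, h.1, h.2⟩
    have hval : ∀ p, 1 ≤ p → p ≤ K.card → ∃ k ∈ K, (k : ℤ) = c p p :=
      fun p h1 h2 => (hO _).1 ⟨p, h1, h2, rfl⟩
    have huniq := Finset.orderEmbOfFin_unique (s := K) rfl
      (f := fun j : Fin K.card => (c (j + 1) (j + 1)).toNat) ?_ ?_
    · intro p hp hpL
      have h1 := kth_eq K ⟨p - 1, by omega⟩
      have h2 := congrFun huniq ⟨p - 1, by omega⟩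
      simp only [Nat.sub_add_cancel hp] at h1 h2
      obtain ⟨k, hk, e⟩ := hval p hp hpL
      omega
    · intro j
      obtain ⟨k, hk, e⟩ := hval (j + 1) (by omega) (by omega)
      simp only [← e, Int.toNat_natCast]
      exact hk
    · intro j j' hjj
      rw [Fin.lt_def] at hjj
      obtain ⟨k, hk, e⟩ := hval (j + 1) (by omega) (by omega)
      obtain ⟨k', hk', e'⟩ := hval (j' + 1) (by omega) (by omega)
      have := h.diag_add 0 (j + 1) (j' - j) (by omega) (by omega)
      have e3 : (j : ℕ) + 1 + (j' - j) = j' + 1 := by omega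
      rw [e3] at this
      simp only [add_zero] at this
      show (c (j + 1) (j + 1)).toNat < (c (j' + 1) (j' + 1)).toNat
      omega

lemma exists_tab (K : Finset ℕ) : ∃ c, IsKTab K c := by
  refine ⟨fun p _ => kth K p, fun p _ _ => rfl, fun p q _ _ _ => le_rfl, fun p q h1 h2 h3 => ?_⟩
  have := kth_lt_s16 K p h1 (by omega)
  simpa using this

/-- The minimum part of `MK`. -/
noncomputable def Wm (a : ℤ → ℤ → ℤ) (K : Finset ℕ) : ℤ :=
  sInf {z : ℤ | ∃ c : ℕ → ℕ → ℤ, IsKTab K c ∧ z = tabSum a K c}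

lemma Wm_le (a : ℤ → ℤ → ℤ) (K : Finset ℕ) (B : ℤ) (hB : ∀ c, IsKTab K c → B ≤ wt a K.card c)
    (c : ℕ → ℕ → ℤ) (hc : IsKTab K c) : Wm a K ≤ wt a K.card c := by
  refine csInf_le ⟨B, ?_⟩ ⟨c, hc, (tabSum_eq_wt a K c).symm⟩
  rintro z ⟨c, hc, rfl⟩
  rw [tabSum_eq_wt]; exact hB c hc

lemma Wm_mem (a : ℤ → ℤ → ℤ) (K : Finset ℕ) (B : ℤ) (hB : ∀ c, IsKTab K c → B ≤ wt a K.card c) :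
    ∃ c, IsKTab K c ∧ wt a K.card c = Wm a K := by
  obtain ⟨c0, hc0⟩ := exists_tab K
  have h := Int.csInf_mem (s := {z : ℤ | ∃ c : ℕ → ℕ → ℤ, IsKTab K c ∧ z = tabSum a K c})
    ⟨_, c0, hc0, rfl⟩ ⟨B, by rintro z ⟨c, hc, rfl⟩; rw [tabSum_eq_wt]; exact hB c hc⟩
  obtain ⟨c, hc, e⟩ := h
  exact ⟨c, hc, by rw [← tabSum_eq_wt]; exact e.symm⟩

lemma wt_nonneg (a : ℤ → ℤ → ℤ) (ha : ∀ k l, 0 ≤ a k l) (L : ℕ) (c : ℕ → ℕ → ℤ) : 0 ≤ wt a L c :=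
  Finset.sum_nonneg fun _ _ => Finset.sum_nonneg fun _ _ => ha _ _

/-- The column part of `MK`. -/
def colk (a : ℤ → ℤ → ℤ) (k : ℕ) : ℤ := ∑ s ∈ Finset.Icc 1 (k - 1), a (s : ℤ) (k : ℤ)

lemma MK_eq (n : ℕ) (a : ℤ → ℤ → ℤ) (K : Finset ℕ) (h1 : K ≠ ∅)
    (h2 : K ≠ Finset.Icc 1 (n + 1)) : MK n a K = -(∑ k ∈ K, colk a k) + Wm a K := by
  unfold MK
  rw [if_neg (by tauto)]; rfl

lemma Astar_eq (n : ℕ) (a : ℤ → ℤ → ℤ) (i m : ℕ) (h : i + m ≤ n) :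
    Astar n a i (i + m) = Astar n a i i + Dp a i m := by
  induction m with
  | zero => simp [Dp]
  | succ m ih =>
    rw [Dp_succ, ← add_assoc (Astar n a i i), ← ih (by omega)]
    unfold Astar
    rw [show Finset.Icc (i + m + 1) (n + 1)
      = insert (i + m + 1) (Finset.Icc (i + (m + 1) + 1) (n + 1)) by ext x; simp; omega,
      Finset.sum_insert (by simp)]
    have e1 : ((i + m + 1 : ℕ) : ℤ) = i + (m + 1 : ℕ) := by push_cast; ring
    have e2 : (i + (m + 1 : ℕ) : ℤ) + 1 = i + 1 + (m + 1 : ℕ) := by ring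
    rw [e1, e2]; ring

lemma lf_spec_s16 (n : ℕ) (a : ℤ → ℤ → ℤ) (ha : IsLusztig n a) (i : ℕ) (hi2 : i ≤ n) :
    ∃ m, lfStar n a i = i + m ∧ i + m ≤ n ∧ (∀ d, Dp a i d ≤ Dp a i m) ∧
      ∀ d, d < m → Dp a i d < Dp a i m := by
  have heps : (∃ l ∈ Finset.Icc i n, Astar n a i l = epsStar n a i) ∧
      ∀ l ∈ Finset.Icc i n, Astar n a i l ≤ epsStar n a i := by
    obtain ⟨M, hM⟩ := Finset.max_of_nonempty
      ((Finset.nonempty_Icc.2 hi2).image (Astar n a i))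
    have e : epsStar n a i = M := by unfold epsStar; rw [hM]; rfl
    rw [e]
    refine ⟨by simpa using Finset.mem_of_max hM, fun l hl => ?_⟩
    exact Finset.le_max_of_eq (Finset.mem_image_of_mem _ hl) hM
  obtain ⟨⟨l0, hl0, e0⟩, hmax⟩ := heps
  obtain ⟨l, hl⟩ := Finset.min_of_nonempty
    (s := (Finset.Icc i n).filter fun l => Astar n a i l = epsStar n a i)
    ⟨l0, by simp only [Finset.mem_filter]; exact ⟨hl0, e0⟩⟩
  have el : lfStar n a i = l := by unfold lfStar; rw [hl]; rfl
  have hlm := Finset.mem_of_min hl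
  rw [Finset.mem_filter, Finset.mem_Icc] at hlm
  obtain ⟨⟨hil, hln⟩, hle⟩ := hlm
  obtain ⟨m, rfl⟩ := Nat.exists_eq_add_of_le hil
  have hmain : ∀ d, i + d ≤ n → Dp a i d ≤ Dp a i m := by
    intro d hd
    have h1 := hmax (i + d) (by simp; omega)
    rw [← hle, Astar_eq n a i d hd, Astar_eq n a i m hln] at h1
    omega
  refine ⟨m, el, hln, ?_, ?_⟩
  · intro d
    rcases Nat.lt_or_ge n (i + d) with hgt | hge
    · obtain ⟨j, rfl⟩ : ∃ j, d = (n - i) + j := ⟨d - (n - i), by omega⟩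
      have : ∀ j, Dp a i (n - i + j) ≤ Dp a i (n - i) := by
        intro j
        induction j with
        | zero => simp
        | succ j ih =>
          rw [← add_assoc, Dp_succ]
          have h1 := ha.1 i (i + (n - i + j + 1 : ℕ))
          have h2 := ha.2 (i + 1) (i + 1 + (n - i + j + 1 : ℕ)) (by push_cast; omega)
          omega
      exact (this j).trans (hmain _ (by omega))
    · exact hmain d hge
  · intro d hd
    refine lt_of_le_of_ne (hmain d (by omega)) fun e => ?_
    have h1 : i + m ≤ i + d := Finset.min_le_of_eq
      (by rw [Finset.mem_filter, Finset.mem_Icc]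
          refine ⟨by omega, ?_⟩
          rw [← hle, Astar_eq n a i d (by omega), Astar_eq n a i m hln, e]) hl
    omega

lemma ftil_apply (n : ℕ) (a : ℤ → ℤ → ℤ) (i m : ℕ) (hl : lfStar n a i = i + m) (v : ℤ) (d : ℕ) :
    ftilStar n a i v (v + d) = a v (v + d) + (if d = m + 1 then (if v = i then 1 else 0) else 0)
      - (if d = m ∧ 1 ≤ m then (if v = i + 1 then 1 else 0) else 0) := by
  unfold ftilStar
  rw [hl]; push_cast
  split_ifs <;> omega

lemma wt_ftil (n : ℕ) (a : ℤ → ℤ → ℤ) (i m : ℕ) (hl : lfStar n a i = i + m) {L : ℕ}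
    {c : ℕ → ℕ → ℤ} (h : Tb L c) :
    wt (ftilStar n a i) L c = wt a L c + oc L c (m + 1) i
      - (if 1 ≤ m then oc L c m (i + 1) else 0) := by
  have key : wt (ftilStar n a i) L c = wt a L c +
      ∑ d ∈ Finset.Icc 1 L, (if d = m + 1 then oc L c d i else 0) -
      ∑ d ∈ Finset.Icc 1 L, (if d = m ∧ 1 ≤ m then oc L c d (i + 1) else 0) := by
    unfold wt
    rw [← Finset.sum_add_distrib, ← Finset.sum_sub_distrib]
    refine Finset.sum_congr rfl fun d hd => ?_
    rw [Finset.mem_Icc] at hd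
    rw [← h.cnt d hd.2, ← h.cnt d hd.2]
    simp only [ftil_apply n a i m hl]
    rw [Finset.sum_sub_distrib, Finset.sum_add_distrib]
    congr 1
    · congr 1
      split_ifs <;> simp
    · split_ifs <;> simp
  have hz : ∀ d v, L < d → oc L c d v = 0 := by
    intro d v hd
    unfold oc; rw [if_neg]; rintro ⟨p, hp, hp', _⟩; omega
  rw [key]
  congr 1
  · congr 1
    rw [Finset.sum_ite_eq']
    split_ifs with hm
    · rfl
    · rw [hz]; simp at hm; omega
  · split_ifs with hm
    · simp only [hm, and_true]
      rw [Finset.sum_ite_eq']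
      split_ifs with hm'
      · rfl
      · rw [hz]; simp at hm'; omega
    · simp [hm]

lemma colk_ftil (n : ℕ) (a : ℤ → ℤ → ℤ) (i m : ℕ) (hi : 1 ≤ i) (hl : lfStar n a i = i + m) (k : ℕ) :
    colk (ftilStar n a i) k = colk a k + (if k = i + 1 then (if m = 0 then 1 else 0) else 0) := by
  have key : colk (ftilStar n a i) k = colk a k +
      ∑ s ∈ Finset.Icc 1 (k - 1), (if s = i then (if k = i + m + 1 then 1 else 0) else 0) -
      ∑ s ∈ Finset.Icc 1 (k - 1),
        (if s = i + 1 then (if k = i + m + 1 ∧ 1 ≤ m then 1 else 0) else 0) := by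
    unfold colk
    rw [← Finset.sum_add_distrib, ← Finset.sum_sub_distrib]
    refine Finset.sum_congr rfl fun s hs => ?_
    unfold ftilStar
    rw [hl]; push_cast
    split_ifs <;> omega
  rw [key, Finset.sum_ite_eq', Finset.sum_ite_eq']
  simp only [Finset.mem_Icc]
  split_ifs <;> omega

lemma card_s (K : Finset ℕ) (i : ℕ) (hiK : i ∉ K) (hi1K : i + 1 ∈ K) :
    (insert i (K.erase (i + 1))).card = K.card := by
  rw [Finset.card_insert_of_notMem (by simp [hiK]), Finset.card_erase_of_mem hi1K]
  have := Finset.card_pos.2 ⟨_, hi1K⟩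
  omega

lemma mem_s_swap (K : Finset ℕ) (i : ℕ) (hiK : i ∉ K) (hi1K : i + 1 ∈ K) (v : ℤ) :
    (∃ k ∈ insert i (K.erase (i + 1)), (k : ℤ) = v) ↔
      ∃ k ∈ K, (k : ℤ) = Equiv.swap (i : ℤ) (i + 1) v := by
  rcases sw_cases i v with ⟨b, e⟩ | ⟨b, e⟩ | ⟨b, b', e⟩ <;> rw [e]
  · exact iff_of_true ⟨i, by simp, b.symm⟩ ⟨i + 1, hi1K, by push_cast; rfl⟩
  · refine iff_of_false ?_ ?_
    · rintro ⟨k, hk, e'⟩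
      obtain rfl : k = i + 1 := by omega
      simp at hk
    · rintro ⟨k, hk, e'⟩
      obtain rfl : k = i := by omega
      exact hiK hk
  · refine exists_congr fun k => and_congr_left fun e' => ?_
    have h1 : k ≠ i := by omega
    have h2 : k ≠ i + 1 := by omega
    simp [h1, h2]

lemma tab_mv_pos {K : Finset ℕ} {c : ℕ → ℕ → ℤ} (h : IsKTab K c) (i : ℤ) (d0 m : ℕ) (hd0 : 1 ≤ d0)
    (hst : (∀ d, d0 ≤ d → d ≤ m → ¬ Oc K.card c d i) ∨
      (∀ d, d0 ≤ d → d ≤ m → ¬ Oc K.card c d (i + 1)))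
    (hm : ¬ Oc K.card c (m + 1) i) (hd : ∀ e, e + 1 = d0 → ¬ Oc K.card c e (i + 1)) :
    IsKTab K (mv i d0 m c) := by
  rw [isKTab_iff] at h ⊢
  refine ⟨h.1.mv i d0 m hst hm hd, fun v => ?_⟩
  rw [Oc_mv, if_neg (by omega)]
  exact h.2 v

lemma tab_mv_down {K : Finset ℕ} {c : ℕ → ℕ → ℤ} (h : IsKTab K c) (i : ℕ) (m : ℕ)
    (hiK : i ∉ K) (hi1K : i + 1 ∈ K)
    (hst : ∀ d, 0 ≤ d → d ≤ m → ¬ Oc K.card c d i)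
    (hm : ¬ Oc K.card c (m + 1) i) :
    IsKTab (insert i (K.erase (i + 1))) (mv i 0 m c) := by
  rw [isKTab_iff] at h ⊢
  rw [card_s K i hiK hi1K]
  refine ⟨h.1.mv i 0 m (Or.inl hst) hm (by simp), fun v => ?_⟩
  rw [Oc_mv, if_pos (by omega), mem_s_swap K i hiK hi1K]
  exact h.2 _

lemma tab_mv_up {K : Finset ℕ} {c : ℕ → ℕ → ℤ} (i : ℕ) (m : ℕ)
    (hiK : i ∉ K) (hi1K : i + 1 ∈ K) (h : IsKTab (insert i (K.erase (i + 1))) c)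
    (hst : ∀ d, 0 ≤ d → d ≤ m → ¬ Oc K.card c d (i + 1))
    (hm : ¬ Oc K.card c (m + 1) i) :
    IsKTab K (mv i 0 m c) := by
  rw [isKTab_iff] at h ⊢
  rw [card_s K i hiK hi1K] at h
  refine ⟨h.1.mv i 0 m (Or.inr hst) hm (by simp), fun v => ?_⟩
  rw [Oc_mv, if_pos (by omega), h.2, mem_s_swap K i hiK hi1K]
  simp

lemma oc_bd (L : ℕ) (c : ℕ → ℕ → ℤ) (d : ℕ) (v : ℤ) : 0 ≤ oc L c d v ∧ oc L c d v ≤ 1 := by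
  unfold oc; split_ifs <;> simp

/-- Starting from an `s_i K`-tableau, the maximal initial run of `i`s can be raised. -/
lemma up_from_s {K : Finset ℕ} {c : ℕ → ℕ → ℤ} (a : ℤ → ℤ → ℤ) (i : ℕ)
    (hiK : i ∉ K) (hi1K : i + 1 ∈ K) (h : IsKTab (insert i (K.erase (i + 1))) c) :
    ∃ d1, IsKTab K (mv i 0 d1 c) ∧ wt a K.card (mv i 0 d1 c) = wt a K.card c + Dp a i d1 ∧
      (∀ d, d ≤ d1 → Oc K.card c d i) ∧ ¬ Oc K.card c (d1 + 1) i ∧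
      (∀ d, d ≤ d1 → ¬ Oc K.card c d (i + 1)) := by
  have h' := (isKTab_iff _ _).1 h
  rw [card_s K i hiK hi1K] at h'
  have hx : Oc K.card c 0 i := (h'.2 _).2 ⟨i, by simp, rfl⟩
  have hy : ¬ Oc K.card c 0 (i + 1) := by
    rw [h'.2]; rintro ⟨k, hk, e⟩
    obtain rfl : k = i + 1 := by omega
    simp at hk
  obtain ⟨d1, -, b1, b2, b3⟩ := up_run h'.1 i 0 hx hy
  refine ⟨d1, tab_mv_up i d1 hiK hi1K h b2 b3, ?_, fun d => b1 d (Nat.zero_le _), b3,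
    fun d => b2 d (Nat.zero_le _)⟩
  rw [wt_up a h'.1 i 0 d1 (Nat.zero_le _) b1 b2]
  simp [Dp]

/-- The core identity. -/
lemma core (n : ℕ) (a : ℤ → ℤ → ℤ) (ha : IsLusztig n a) (i m : ℕ) (hl : lfStar n a i = i + m)
    (hmax : ∀ d, Dp a i d ≤ Dp a i m) (hmin : ∀ d, d < m → Dp a i d < Dp a i m)
    (K : Finset ℕ) (hiK : i ∉ K) (hi1K : i + 1 ∈ K) :
    Wm (ftilStar n a i) K - (if m = 0 then 1 else 0) =
      min (Wm a K) (Wm a (insert i (K.erase (i + 1))) + Dp a i m - 1) := by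
  have hcs := card_s K i hiK hi1K
  have w0 : ∀ J c, IsKTab J c → 0 ≤ wt a J.card c := fun J c _ => wt_nonneg a ha.1 _ c
  have hwt : ∀ c, IsKTab K c → wt (ftilStar n a i) K.card c - (if m = 0 then 1 else 0) =
      wt a K.card c + oc K.card c (m + 1) i - oc K.card c m (i + 1) := by
    intro c hc
    have h' := (isKTab_iff _ _).1 hc
    rw [wt_ftil n a i m hl h'.1]
    by_cases hm : m = 0
    · subst hm
      have : oc K.card c 0 (i + 1) = 1 := by
        unfold oc; rw [if_pos]; exact (h'.2 _).2 ⟨i + 1, hi1K, by push_cast; rfl⟩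
      simp [this]
    · rw [if_pos (by omega), if_neg hm]; ring
  have w1 : ∀ c, IsKTab K c → -1 ≤ wt (ftilStar n a i) K.card c := by
    intro c hc
    have h1 := hwt c hc
    have h2 := w0 K c hc
    have h3 := oc_bd K.card c (m + 1) i
    have h4 := oc_bd K.card c m (i + 1)
    split_ifs at h1 <;> omega
  -- the new minimum is at most every old weight
  have L1 : ∀ c, IsKTab K c →
      Wm (ftilStar n a i) K - (if m = 0 then 1 else 0) ≤ wt a K.card c := by
    intro c hc
    have h' := (isKTab_iff _ _).1 hc
    by_cases hbad : Oc K.card c (m + 1) i ∧ ¬ Oc K.card c m (i + 1)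
    · obtain ⟨hx, hy⟩ := hbad
      have hy' : ¬ Oc K.card c (m + 1) (i + 1) := fun h3 => hy (h'.1.force_down m i hx h3)
      obtain ⟨d1, b0, b1, b2, b3⟩ := up_run h'.1 i (m + 1) hx hy'
      have hc' : IsKTab K (mv i (m + 1) d1 c) :=
        tab_mv_pos hc i (m + 1) d1 (by omega) (Or.inr b2) b3
          (fun e he => by obtain rfl : e = m := by omega
                          exact hy)
      have e1 := wt_up a h'.1 i (m + 1) d1 b0 b1 b2
      have e2 := hwt _ hc'
      have e3 : oc K.card (mv i (m + 1) d1 c) (m + 1) i = 0 := by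
        unfold oc
        rw [if_neg]
        rw [Oc_mv, if_pos (by omega), Equiv.swap_apply_left]
        exact hy'
      have e4 := oc_bd K.card (mv i (m + 1) d1 c) m (i + 1)
      have e5 := Wm_le _ K (-1) w1 _ hc'
      have e6 := hmax d1
      simp only [Nat.add_sub_cancel] at e1
      omega
    · have e2 := hwt c hc
      have e3 : oc K.card c (m + 1) i ≤ oc K.card c m (i + 1) := by
        unfold oc
        split_ifs <;> first | omega | tauto
      have e5 := Wm_le _ K (-1) w1 _ hc
      omega
  apply le_antisymm
  · apply le_min
    · obtain ⟨c, hc, e⟩ := Wm_mem a K 0 (w0 K)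
      rw [← e]; exact L1 c hc
    · obtain ⟨c, hc, e⟩ := Wm_mem a _ 0 (w0 (insert i (K.erase (i + 1))))
      rw [hcs] at e
      obtain ⟨d1, hc', e1, b1, b2, b3⟩ := up_from_s a i hiK hi1K hc
      rcases Nat.lt_or_ge d1 m with hlt | hge
      · have := L1 _ hc'
        have := hmin d1 hlt
        omega
      · have e2 := hwt _ hc'
        have e3 : oc K.card (mv i 0 d1 c) m (i + 1) = 1 := by
          unfold oc
          rw [if_pos]
          rw [Oc_mv, if_pos (by omega), Equiv.swap_apply_right]
          exact b1 m hge
        have e4 : oc K.card (mv i 0 d1 c) (m + 1) i = 0 := by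
          unfold oc
          rw [if_neg]
          rw [Oc_mv]
          split_ifs with hr
          · rw [Equiv.swap_apply_left]; exact b3 _ hr.2
          · obtain rfl : m = d1 := by omega
            exact b2
        have e5 := Wm_le _ K (-1) w1 _ hc'
        have := hmax d1
        omega
  · obtain ⟨c, hc, e⟩ := Wm_mem _ K (-1) w1
    have h' := (isKTab_iff _ _).1 hc
    have e2 := hwt c hc
    have e3 := Wm_le a K 0 (w0 K) c hc
    by_cases hbad : Oc K.card c m (i + 1) ∧ ¬ Oc K.card c (m + 1) i
    · obtain ⟨hy, hx⟩ := hbad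
      have o1 : oc K.card c m (i + 1) = 1 := by unfold oc; rw [if_pos hy]
      have o2 : oc K.card c (m + 1) i = 0 := by unfold oc; rw [if_neg hx]
      obtain ⟨d0, b0, b1, b2, b3⟩ := down_run h'.1 i m hy hx
      have e4 := wt_down a h'.1 i d0 m b0 b1 b2
      rcases Nat.eq_zero_or_pos d0 with rfl | hpos
      · have hc' := tab_mv_down hc i m hiK hi1K b2 hx
        have e5 := Wm_le a _ 0 (w0 _) _ hc'
        rw [hcs] at e5
        have e6 : Dp a i (0 - 1) = 0 := by simp [Dp]
        refine (min_le_right _ _).trans ?_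
        omega
      · have hc' := tab_mv_pos hc i d0 m hpos (Or.inl b2) hx b3
        have e5 := Wm_le a _ 0 (w0 _) _ hc'
        have e6 := hmin (d0 - 1) (by omega)
        refine (min_le_left _ _).trans ?_
        omega
    · have e4 : oc K.card c m (i + 1) ≤ oc K.card c (m + 1) i := by
        unfold oc
        split_ifs <;> first | omega | tauto
      refine (min_le_left _ _).trans ?_
      omega

lemma Wm_J (n : ℕ) (a : ℤ → ℤ → ℤ) (ha : IsLusztig n a) (i m : ℕ) (him : i + m ≤ n)
    (hmax : ∀ d, Dp a i d ≤ Dp a i m) :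
    Wm a (insert i ((Finset.Icc (i + 1) (n + 1)).erase (i + 1))) =
      Wm a (Finset.Icc (i + 1) (n + 1)) - Dp a i m := by
  obtain ⟨J, hJ⟩ : ∃ J, J = Finset.Icc (i + 1) (n + 1) := ⟨_, rfl⟩
  rw [← hJ]
  have hiK : i ∉ J := by simp [hJ]
  have hi1K : i + 1 ∈ J := by simp [hJ]; omega
  have hcs := card_s J i hiK hi1K
  have hcard : J.card = n + 1 - i := by rw [hJ, Nat.card_Icc]; omega
  have w0 : ∀ J c, IsKTab J c → 0 ≤ wt a J.card c := fun J c _ => wt_nonneg a ha.1 _ c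
  apply le_antisymm
  · obtain ⟨c, hc, e⟩ := Wm_mem a J 0 (w0 J)
    have h' := (isKTab_iff _ _).1 hc
    have hb : ∀ p, 1 ≤ p → p ≤ J.card → (i : ℤ) + 1 ≤ c p p ∧ c p p ≤ n + 1 := by
      intro p hp hpL
      obtain ⟨k, hk, e⟩ := (h'.2 (c p p)).1 ⟨p, hp, hpL, rfl⟩
      rw [hJ, Finset.mem_Icc] at hk
      omega
    have hx : ∀ d, ¬ Oc J.card c d i := by
      rintro d ⟨p, hp, hpL, e⟩
      have h1 := hb p hp (by omega)
      have h2 := h'.1.row_mono p d hp hpL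
      omega
    have hy : ∀ d, 0 ≤ d → d ≤ m → Oc J.card c d (i + 1) := by
      intro d _ hd
      refine ⟨1, le_rfl, by omega, ?_⟩
      have h1 := hb 1 le_rfl (by omega)
      have h2 := h'.1.row_mono 1 d le_rfl (by omega)
      have h3 := h'.1.col_add 1 (1 + d) d le_rfl le_rfl (by omega)
      have h4 := h'.1.diag_add 0 (1 + d) (J.card - (1 + d)) (by omega) (by omega)
      have e5 : 1 + d + (J.card - (1 + d)) = J.card := by omega
      rw [e5] at h4
      simp only [add_zero] at h4
      have h6 := hb J.card (by omega) le_rfl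
      omega
    have hc' := tab_mv_down hc i m hiK hi1K (fun d _ _ => hx d) (hx _)
    have e4 := wt_down a h'.1 i 0 m (by omega) hy (fun d _ _ => hx d)
    have e5 := Wm_le a _ 0 (w0 _) _ hc'
    rw [hcs] at e5
    have e6 : Dp a i (0 - 1) = 0 := by simp [Dp]
    omega
  · obtain ⟨c, hc, e⟩ := Wm_mem a _ 0 (w0 (insert i (J.erase (i + 1))))
    rw [hcs] at e
    obtain ⟨d1, hc', e1, -⟩ := up_from_s a i hiK hi1K hc
    have e5 := Wm_le a J 0 (w0 _) _ hc'
    have := hmax d1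
    omega

lemma col_s (a : ℤ → ℤ → ℤ) (K : Finset ℕ) (i : ℕ) (hiK : i ∉ K) (hi1K : i + 1 ∈ K) :
    ∑ k ∈ insert i (K.erase (i + 1)), colk a k =
      ∑ k ∈ K, colk a k - colk a (i + 1) + colk a i := by
  rw [Finset.sum_insert (by simp [hiK]), ← Finset.add_sum_erase K _ hi1K]
  ring

/-- Anderson–Mirković conjecture, type `A`, in terms of Lusztig data: for
every Lusztig datum `a`, every `1 ≤ i ≤ n`, and every `K ∈ M_n^×` with `i ∉ K` and
`i+1 ∈ K`, one has `M_K(f̃_i^* a) = min{ M_K(a), M_{s_iK}(a) + c_i^*(a) }`, where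
`s_iK = (K ∖ {i+1}) ∪ {i}` and `c_i^*(a) = M_{[i+1,n+1]}(a) − M_{{i}∪[i+2,n+1]}(a) − 1`. -/
theorem stmt16 (n : ℕ) (hn : 1 ≤ n) (a : ℤ → ℤ → ℤ) (ha : IsLusztig n a)
    (i : ℕ) (hi1 : 1 ≤ i) (hi2 : i ≤ n)
    (K : Finset ℕ) (hK : K ⊆ Finset.Icc 1 (n + 1)) (hKne : K ≠ ∅)
    (hKfull : K ≠ Finset.Icc 1 (n + 1)) (hiK : i ∉ K) (hi1K : i + 1 ∈ K) :
    MK n (ftilStar n a i) K =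
      min (MK n a K)
        (MK n a (insert i (K.erase (i + 1))) +
          (MK n a (Finset.Icc (i + 1) (n + 1)) -
            MK n a (insert i (Finset.Icc (i + 2) (n + 1))) - 1)) := by
  obtain ⟨m, hl, him, hmax, hmin⟩ := lf_spec_s16 n a ha i hi2
  have hJ : insert i (Finset.Icc (i + 2) (n + 1)) =
      insert i ((Finset.Icc (i + 1) (n + 1)).erase (i + 1)) := by
    ext x; simp; omega
  have hiJ : i ∉ Finset.Icc (i + 1) (n + 1) := by simp
  have hi1J : i + 1 ∈ Finset.Icc (i + 1) (n + 1) := by simp; omega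
  have hfull : ∀ J : Finset ℕ, i ∉ J → J ≠ Finset.Icc 1 (n + 1) := by
    rintro J h rfl; apply h; simp; omega
  have hfull' : ∀ J : Finset ℕ, insert i (J.erase (i + 1)) ≠ Finset.Icc 1 (n + 1) := by
    intro J h
    have : i + 1 ∈ insert i (J.erase (i + 1)) := by rw [h]; simp; omega
    simp at this
  rw [hJ, MK_eq n _ K hKne hKfull, MK_eq n _ K hKne hKfull,
    MK_eq n a _ (Finset.insert_ne_empty _ _) (hfull' K),
    MK_eq n a _ (Finset.insert_ne_empty _ _) (hfull' _),
    MK_eq n a _ (Finset.ne_empty_of_mem hi1J) (hfull _ hiJ),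
    col_s a K i hiK hi1K, col_s a _ i hiJ hi1J, Wm_J n a ha i m him hmax]
  have hcol : ∑ k ∈ K, colk (ftilStar n a i) k =
      ∑ k ∈ K, colk a k + (if m = 0 then 1 else 0) := by
    simp only [colk_ftil n a i m hi1 hl]
    rw [Finset.sum_add_distrib, Finset.sum_ite_eq', if_pos hi1K]
  have hcore := core n a ha i m hl hmax hmin K hiK hi1K
  rw [hcol]
  omega
end

section
/- For every Lusztig datum a ∈ ℬ, every 1 ≤ i ≤ n, and every K ∈ M_n^× with i ∉ K and i+1 ∈ K, one has M_K(a) = min{ M_K(ā), M_{s_iK}(ā) + ⟨h_i, wt(ā)⟩ − ε_i^*(a) }, where ā = (ẽ_i^*)^{ε_i^*(a)} a is the ε_i^*(a)-fold application of ẽ_i^* to a (well defined since each application of ẽ_i^* decreases ε_i^* by 1), s_iK = (K ∖ {i+1}) ∪ {i}, and ⟨h_i, wt(ā)⟩ = −2 m_i(ā) + m_{i−1}(ā) + m_{i+1}(ā). -/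
/-- `m_j(a) = Σ_{k=1}^{j} Σ_{l=j+1}^{n+1} a_{k,l}` (so `m_0 = m_{n+1} = 0`). -/
def mwt (n : ℕ) (a : ℤ → ℤ → ℤ) (j : ℕ) : ℤ :=
  ∑ k ∈ Finset.Icc 1 j, ∑ l ∈ Finset.Icc (j + 1) (n + 1), a (k : ℤ) (l : ℤ)


namespace Tab

/-- The cost of a layer. -/
def S (a : ℤ → ℤ → ℤ) (d m : ℕ) (y : ℕ → ℤ) : ℤ :=
  ∑ p ∈ Finset.Icc 1 m, a (y p) (y p + (d : ℤ))

/-- `y` (of length `m`) interlaces `x` (of length `m+1`). -/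
def Inter (m : ℕ) (x y : ℕ → ℤ) : Prop :=
  ∀ p, 1 ≤ p → p ≤ m → x p ≤ y p ∧ y p < x (p + 1)

/-- Starting from layer `d` equal to `x` (of length `m`), the rest costs at most `z`. -/
def P (a : ℤ → ℤ → ℤ) : ℕ → ℕ → (ℕ → ℤ) → ℤ → Prop
  | _, 0, _, z => 0 ≤ z
  | d, m + 1, x, z => ∃ y, Inter m x y ∧ P a (d + 1) m y (z - S a (d + 1) m y)

def SM (m : ℕ) (x : ℕ → ℤ) : Prop := ∀ p, 1 ≤ p → p + 1 ≤ m → x p < x (p + 1)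

def Mem (j : ℤ) (m : ℕ) (x : ℕ → ℤ) : Prop := ∃ p, 1 ≤ p ∧ p ≤ m ∧ x p = j

def sw (i : ℤ) (x : ℕ → ℤ) : ℕ → ℤ := fun p => if x p = i + 1 then i else x p
def sw' (i : ℤ) (x : ℕ → ℤ) : ℕ → ℤ := fun p => if x p = i then i + 1 else x p

structure Good (i : ℤ) (a b : ℤ → ℤ → ℤ) (g r : ℕ → ℤ) : Prop where
  hw : ∀ d : ℕ, 1 ≤ d → b i (i + d) = a i (i + d) - r d
  hv : ∀ d : ℕ, 1 ≤ d → b (i + 1) (i + 1 + d) = a (i + 1) (i + 1 + d) + r (d + 1)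
  hg : ∀ d : ℕ, 1 ≤ d → b i (i + d) + g d = g (d + 1) + a (i + 1) (i + 1 + d)
  g0 : ∀ d, 1 ≤ d → 0 ≤ g d
  r0 : ∀ d, 1 ≤ d → 0 ≤ r d
  gr : ∀ d, 1 ≤ d → g d = 0 ∨ r d = 0
  ho : ∀ k l, k ≠ i → k ≠ i + 1 → b k l = a k l

theorem SM.lt {m : ℕ} {x : ℕ → ℤ} (h : SM m x) {p q : ℕ} (hp : 1 ≤ p) (hpq : p < q) (hq : q ≤ m) :
    x p < x q := by
  induction q with
  | zero => omega
  | succ q ih =>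
    rcases Nat.lt_or_ge p q with h1 | h1
    · have := ih h1 (by omega)
      have := h q (by omega) hq
      omega
    · have : p = q := by omega
      subst this
      exact h p hp hq

theorem SM.inj {m : ℕ} {x : ℕ → ℤ} (h : SM m x) {p q : ℕ} (hp : 1 ≤ p) (hp' : p ≤ m)
    (hq : 1 ≤ q) (hq' : q ≤ m) (e : x p = x q) : p = q := by
  rcases Nat.lt_trichotomy p q with h1 | h1 | h1
  · have := h.lt hp h1 hq'; omega
  · exact h1
  · have := h.lt hq h1 hp'; omega

theorem Inter.sm {m : ℕ} {x y : ℕ → ℤ} (h : Inter m x y) : SM m y := by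
  intro p hp hp'
  have h1 := h p hp (by omega)
  have h2 := h (p + 1) (by omega) hp'
  omega

theorem P_congr (a : ℤ → ℤ → ℤ) (d m : ℕ) (x x' : ℕ → ℤ) (z : ℤ)
    (h : ∀ p, 1 ≤ p → p ≤ m → x p = x' p) (hP : P a d m x z) : P a d m x' z := by
  cases m with
  | zero => exact hP
  | succ m =>
    obtain ⟨y, hy, hz⟩ := hP
    refine ⟨y, ?_, hz⟩
    intro p hp hp'
    rw [← h p hp (by omega), ← h (p + 1) (by omega) (by omega)]
    exact hy p hp hp'

theorem S_congr (a : ℤ → ℤ → ℤ) (d m : ℕ) (x x' : ℕ → ℤ)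
    (h : ∀ p, 1 ≤ p → p ≤ m → x p = x' p) : S a d m x = S a d m x' := by
  unfold S
  apply Finset.sum_congr rfl
  intro p hp
  rw [Finset.mem_Icc] at hp
  rw [h p hp.1 hp.2]

theorem P_mono (a : ℤ → ℤ → ℤ) (m : ℕ) : ∀ (d : ℕ) (x : ℕ → ℤ) (z z' : ℤ),
    z ≤ z' → P a d m x z → P a d m x z' := by
  induction m with
  | zero => intro d x z z' h hP; exact le_trans hP h
  | succ m ih =>
    rintro d x z z' h ⟨y, hy, hz⟩
    exact ⟨y, hy, ih _ _ _ _ (by omega) hz⟩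

theorem sum_ind {m : ℕ} {y : ℕ → ℤ} (h : SM m y) (j c : ℤ) [Decidable (Mem j m y)] :
    ∑ p ∈ Finset.Icc 1 m, (if y p = j then c else 0) = if Mem j m y then c else 0 := by
  split_ifs with hm
  · obtain ⟨p, hp, hp', e⟩ := hm
    rw [Finset.sum_eq_single p]
    · rw [if_pos e]
    · intro q hq hne
      rw [Finset.mem_Icc] at hq
      rw [if_neg]
      intro e'
      exact hne (h.inj hq.1 hq.2 hp hp' (by omega))
    · intro hn
      exact absurd (Finset.mem_Icc.2 ⟨hp, hp'⟩) hn
  · apply Finset.sum_eq_zero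
    intro p hp
    rw [Finset.mem_Icc] at hp
    rw [if_neg]
    intro e
    exact hm ⟨p, hp.1, hp.2, e⟩

open Classical in
theorem S_ab {i : ℤ} {a b : ℤ → ℤ → ℤ} {g r : ℕ → ℤ} (G : Good i a b g r) {d m : ℕ} (hd : 1 ≤ d)
    {y : ℕ → ℤ} (h : SM m y) :
    S a d m y = S b d m y + (if Mem i m y then r d else 0)
      - (if Mem (i + 1) m y then r (d + 1) else 0) := by
  rw [← sum_ind h, ← sum_ind h, S, S, ← Finset.sum_add_distrib, ← Finset.sum_sub_distrib]
  apply Finset.sum_congr rfl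
  intro p _
  by_cases h1 : y p = i
  · rw [if_pos h1, if_neg (by omega), h1, G.hw d hd]; ring
  · by_cases h2 : y p = i + 1
    · rw [if_neg h1, if_pos h2, h2, G.hv d hd]; ring
    · rw [if_neg h1, if_neg h2, G.ho _ _ h1 h2]; ring

theorem S_sw {i : ℤ} {b : ℤ → ℤ → ℤ} {d m : ℕ}
    {y : ℕ → ℤ} (h : SM m y) (hm : Mem (i + 1) m y) :
    S b d m (sw i y) = S b d m y + (b i (i + d) - b (i + 1) (i + 1 + d)) := by
  classical
  have := sum_ind h (i + 1) (b i (i + d) - b (i + 1) (i + 1 + d))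
  rw [if_pos hm] at this
  rw [← this, S, S, ← Finset.sum_add_distrib]
  apply Finset.sum_congr rfl
  intro p _
  unfold sw
  by_cases h2 : y p = i + 1
  · rw [if_pos h2, if_pos h2, h2]; ring
  · rw [if_neg h2, if_neg h2]; ring

theorem noboth {i : ℤ} {m : ℕ} {x y : ℕ → ℤ} (hI : Inter m x y)
    (hx : ∀ p, 1 ≤ p → p ≤ m + 1 → x p ≠ i + 1)
    (h1 : Mem i m y) (h2 : Mem (i + 1) m y) : False := by
  obtain ⟨p, hp, hp', e⟩ := h1
  obtain ⟨q, hq, hq', e'⟩ := h2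
  have hs := hI.sm
  have a1 := (hI p hp hp').2
  have a2 := hx (p + 1) (by omega) (by omega)
  have hpq : p < q := by
    by_contra hc
    rcases Nat.lt_or_ge q p with h | h
    · have := hs.lt hq h hp'; omega
    · have : p = q := by omega
      subst this; omega
  have a3 := (hI (p + 1) (by omega) (by omega)).1
  rcases Nat.lt_or_ge (p + 1) q with h | h
  · have := hs.lt (by omega : 1 ≤ p + 1) h hq'; omega
  · have : q = p + 1 := by omega
    subst this; omega

/-- The main comparison. -/
theorem main {i : ℤ} {a b : ℤ → ℤ → ℤ} {g r : ℕ → ℤ} (G : Good i a b g r) (m : ℕ) :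
    ∀ (d : ℕ) (x : ℕ → ℤ), SM m x →
      (¬ Mem (i + 1) m x → ∀ z, P a d m x z ↔ P b d m x z) ∧
      (Mem (i + 1) m x → Mem i m x → ∀ z, P a d m x z ↔ P b d m x (z - r (d + 1))) ∧
      (Mem (i + 1) m x → ¬ Mem i m x → ∀ z, P a d m x z ↔
        (P b d m x (z - r (d + 1)) ∨ P b d m (sw i x) (z - g (d + 1)))) := by
  induction m with
  | zero =>
    intro d x _
    have hn : ∀ j, ¬ Mem j 0 x := by rintro j ⟨p, hp, hp', _⟩; omega
    exact ⟨fun _ z => Iff.rfl, fun h => absurd h (hn _), fun h => absurd h (hn _)⟩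
  | succ m ih =>
    intro d x hx
    -- facts on the costs of the next layer
    have U0 : ∀ y, SM m y → ¬ Mem i m y → ¬ Mem (i + 1) m y → ∀ z,
        (P a (d + 1) m y (z - S a (d + 1) m y) ↔ P b (d + 1) m y (z - S b (d + 1) m y)) := by
      intro y hy h1 h2 z
      have e := S_ab G (by omega : 1 ≤ d + 1) hy
      rw [if_neg h1, if_neg h2] at e
      rw [(ih (d + 1) y hy).1 h2, e]
      simp
    have UI : ∀ y, SM m y → Mem i m y → ∀ z,
        (P a (d + 1) m y (z - S a (d + 1) m y) ↔
          P b (d + 1) m y (z - r (d + 1) - S b (d + 1) m y)) := by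
      intro y hy h1 z
      have e := S_ab G (by omega : 1 ≤ d + 1) hy
      rw [if_pos h1] at e
      by_cases h2 : Mem (i + 1) m y
      · rw [if_pos h2] at e
        rw [(ih (d + 1) y hy).2.1 h2 h1, e]
        ring_nf
      · rw [if_neg h2] at e
        rw [(ih (d + 1) y hy).1 h2, e]
        ring_nf
    have U1 : ∀ y, SM m y → ¬ Mem i m y → Mem (i + 1) m y → ∀ z,
        (P a (d + 1) m y (z - S a (d + 1) m y) ↔
          (P b (d + 1) m y (z - S b (d + 1) m y) ∨
           P b (d + 1) m (sw i y) (z - g (d + 1) - S b (d + 1) m (sw i y)))) := by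
      intro y hy h1 h2 z
      have e := S_ab G (by omega : 1 ≤ d + 1) hy
      rw [if_neg h1, if_pos h2] at e
      have e2 := S_sw (b := b) (d := d + 1) hy h2
      have e3 := G.hg (d + 1) (by omega)
      have e4 := G.hv (d + 1) (by omega)
      rw [(ih (d + 1) y hy).2.2 h2 h1]
      have q1 : z - S a (d + 1) m y - r (d + 1 + 1) = z - S b (d + 1) m y := by
        rw [e]; ring
      have q2 : z - S a (d + 1) m y - g (d + 1 + 1)
          = z - g (d + 1) - S b (d + 1) m (sw i y) := by
        rw [e, e2, e4]; linarith
      rw [q1, q2]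
    have mono : ∀ y z z', z ≤ z' → P b (d + 1) m y (z - S b (d + 1) m y) →
        P b (d + 1) m y (z' - S b (d + 1) m y) :=
      fun y z z' h => P_mono b m _ _ _ _ (by omega)
    have g0 := G.g0 (d + 1) (by omega)
    have r0 := G.r0 (d + 1) (by omega)
    have gr := G.gr (d + 1) (by omega)
    -- the swapped version of `y`
    have sw'1 : ∀ y, ¬ Mem (i + 1) m y → ∀ p, 1 ≤ p → p ≤ m → y p = sw i (sw' i y) p := by
      intro y hy p hp hp'
      have : y p ≠ i + 1 := fun e => hy ⟨p, hp, hp', e⟩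
      unfold sw sw'
      split_ifs <;> simp_all
    have sw'2 : ∀ y, ¬ Mem i m (sw' i y) := by
      rintro y ⟨p, hp, hp', e⟩
      unfold sw' at e
      split_ifs at e <;> omega
    have sw'3 : ∀ y, Mem i m y → Mem (i + 1) m (sw' i y) := by
      rintro y ⟨p, hp, hp', e⟩
      exact ⟨p, hp, hp', by unfold sw'; rw [if_pos e]⟩
    have sw1 : ∀ y, ¬ Mem (i + 1) m (sw i y) := by
      rintro y ⟨p, hp, hp', e⟩
      unfold sw at e
      split_ifs at e <;> omega
    have sw2 : ∀ y, Mem (i + 1) m y → Mem i m (sw i y) := by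
      rintro y ⟨p, hp, hp', e⟩
      exact ⟨p, hp, hp', by unfold sw; rw [if_pos e]⟩
    refine ⟨?_, ?_, ?_⟩
    · intro hn z
      have hn' : ∀ p, 1 ≤ p → p ≤ m + 1 → x p ≠ i + 1 := fun p hp hp' e => hn ⟨p, hp, hp', e⟩
      constructor
      · rintro ⟨y, hy, hz⟩
        by_cases h1 : Mem i m y
        · rw [UI y hy.sm h1] at hz
          exact ⟨y, hy, mono y _ _ (by omega) hz⟩
        · by_cases h2 : Mem (i + 1) m y
          · rw [U1 y hy.sm h1 h2] at hz
            rcases hz with hz | hz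
            · exact ⟨y, hy, hz⟩
            · refine ⟨sw i y, ?_, mono _ _ _ (by omega) hz⟩
              intro p hp hp'
              have k1 := hy p hp hp'
              have k2 := hn' p hp (by omega)
              unfold sw
              split_ifs <;> omega
          · rw [U0 y hy.sm h1 h2] at hz
            exact ⟨y, hy, hz⟩
      · rintro ⟨y, hy, hz⟩
        by_cases h1 : Mem i m y
        · have h2 : ¬ Mem (i + 1) m y := fun h2 => noboth hy hn' h1 h2
          rcases gr with h | h
          · have hy' : Inter m x (sw' i y) := by
              intro p hp hp'
              have k1 := hy p hp hp'
              have k2 := hn' (p + 1) (by omega) (by omega)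
              unfold sw'
              split_ifs <;> omega
            refine ⟨sw' i y, hy', ?_⟩
            rw [U1 _ hy'.sm (sw'2 y) (sw'3 y h1)]
            right
            rw [h, sub_zero, ← S_congr b _ _ _ _ (sw'1 y h2)]
            exact P_congr _ _ _ _ _ _ (sw'1 y h2) hz
          · refine ⟨y, hy, ?_⟩
            rw [UI y hy.sm h1, h, sub_zero]
            exact hz
        · by_cases h2 : Mem (i + 1) m y
          · refine ⟨y, hy, ?_⟩
            rw [U1 y hy.sm h1 h2]
            exact Or.inl hz
          · refine ⟨y, hy, ?_⟩
            rw [U0 y hy.sm h1 h2]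
            exact hz
    · intro h1 h2 z
      have hyi : ∀ y, Inter m x y → Mem i m y := by
        intro y hy
        obtain ⟨q, hq, hq', e'⟩ := h1
        obtain ⟨p, hp, hp', e⟩ := h2
        have hpq : p < q := by
          by_contra hc
          rcases Nat.lt_or_ge q p with h | h
          · have := hx.lt hq h hp'; omega
          · have : p = q := by omega
            subst this; omega
        have k := hy p hp (by omega)
        have : x (p + 1) ≤ i + 1 := by
          rcases Nat.lt_or_ge (p + 1) q with h | h
          · have := hx.lt (by omega : 1 ≤ p + 1) h hq'; omega
          · have : q = p + 1 := by omega
            subst this; omega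
        exact ⟨p, hp, by omega, by omega⟩
      constructor
      · rintro ⟨y, hy, hz⟩
        rw [UI y hy.sm (hyi y hy)] at hz
        exact ⟨y, hy, hz⟩
      · rintro ⟨y, hy, hz⟩
        refine ⟨y, hy, ?_⟩
        rw [UI y hy.sm (hyi y hy)]
        exact hz
    · intro h1 h2 z
      have hn' : ∀ p, 1 ≤ p → p ≤ m + 1 → x p ≠ i := fun p hp hp' e => h2 ⟨p, hp, hp', e⟩
      constructor
      · rintro ⟨y, hy, hz⟩
        by_cases k1 : Mem i m y
        · rw [UI y hy.sm k1] at hz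
          exact Or.inl ⟨y, hy, hz⟩
        · have hyn : ∀ p, 1 ≤ p → p ≤ m → y p ≠ i := fun p hp hp' e => k1 ⟨p, hp, hp', e⟩
          have key : P b (d + 1) m y (z - S b (d + 1) m y) →
              P b d (m + 1) x (z - r (d + 1)) ∨ P b d (m + 1) (sw i x) (z - g (d + 1)) := by
            intro hz
            rcases gr with h | h
            · right
              rw [h, sub_zero]
              refine ⟨y, ?_, hz⟩
              intro p hp hp'
              have j1 := hy p hp hp'
              have j2 := hyn p hp hp'
              unfold sw
              split_ifs <;> omega
            · left
              rw [h, sub_zero]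
              exact ⟨y, hy, hz⟩
          by_cases k2 : Mem (i + 1) m y
          · rw [U1 y hy.sm k1 k2] at hz
            rcases hz with hz | hz
            · exact key hz
            · right
              refine ⟨sw i y, ?_, hz⟩
              intro p hp hp'
              have j1 := hy p hp hp'
              have j2 := hyn p hp hp'
              unfold sw
              split_ifs <;> omega
          · rw [U0 y hy.sm k1 k2] at hz
            exact key hz
      · rintro (⟨y, hy, hz⟩ | ⟨y, hy, hz⟩)
        · refine ⟨y, hy, ?_⟩
          by_cases k1 : Mem i m y
          · rw [UI y hy.sm k1]; exact hz
          · by_cases k2 : Mem (i + 1) m y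
            · rw [U1 y hy.sm k1 k2]; exact Or.inl (mono _ _ _ (by omega) hz)
            · rw [U0 y hy.sm k1 k2]; exact mono _ _ _ (by omega) hz
        · have hsx : ∀ p, 1 ≤ p → p ≤ m + 1 → sw i x p ≠ i + 1 := by
            intro p _ _
            unfold sw
            split_ifs <;> omega
          by_cases k1 : Mem i m y
          · have k2 : ¬ Mem (i + 1) m y := fun k2 => noboth hy hsx k1 k2
            have hy' : Inter m x (sw' i y) := by
              intro p hp hp'
              have j1 := hy p hp hp'
              have j2 := hsx (p + 1) (by omega) (by omega)
              unfold sw'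
              unfold sw at j1 j2
              split_ifs at j1 j2 ⊢ <;> omega
            refine ⟨sw' i y, hy', ?_⟩
            rw [U1 _ hy'.sm (sw'2 y) (sw'3 y k1)]
            right
            rw [← S_congr b _ _ _ _ (sw'1 y k2)]
            exact P_congr _ _ _ _ _ _ (sw'1 y k2) hz
          · have hy' : Inter m x y := by
              intro p hp hp'
              have j1 := hy p hp hp'
              have j2 : y p ≠ i := fun e => k1 ⟨p, hp, hp', e⟩
              unfold sw at j1
              split_ifs at j1 <;> omega
            refine ⟨y, hy', ?_⟩
            by_cases k2 : Mem (i + 1) m y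
            · rw [U1 y hy.sm k1 k2]; exact Or.inl (mono _ _ _ (by omega) hz)
            · rw [U0 y hy.sm k1 k2]; exact mono _ _ _ (by omega) hz

/-- Abstract tableaux with prescribed diagonal `x`. -/
def T (m : ℕ) (x : ℕ → ℤ) (c : ℕ → ℕ → ℤ) : Prop :=
  (∀ p : ℕ, 1 ≤ p → p ≤ m → c p p = x p) ∧
  (∀ p q : ℕ, 1 ≤ p → p ≤ q → q + 1 ≤ m → c p q ≤ c p (q + 1)) ∧
  (∀ p q : ℕ, 1 ≤ p → p + 1 ≤ q → q ≤ m → c p q < c (p + 1) q)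

def TS (a : ℤ → ℤ → ℤ) (d m : ℕ) (c : ℕ → ℕ → ℤ) : ℤ :=
  ∑ p ∈ Finset.Icc 1 m, ∑ q ∈ Finset.Icc (p + 1) m, a (c p q) (c p q + ((q : ℤ) - (p : ℤ)) + d)

theorem sum_shift (f : ℕ → ℤ) (p m : ℕ) (h : p ≤ m) :
    ∑ q ∈ Finset.Icc (p + 1) (m + 1), f q = f (p + 1) + ∑ q ∈ Finset.Icc (p + 1) m, f (q + 1) := by
  have e : Finset.Icc (p + 1) (m + 1) = insert (p + 1) (Finset.Icc (p + 1 + 1) (m + 1)) := by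
    ext q; simp only [Finset.mem_insert, Finset.mem_Icc]; omega
  rw [e, Finset.sum_insert (by simp), ← Finset.image_add_right_Icc,
    Finset.sum_image (by intro x _ y _ h; exact Nat.add_right_cancel h)]

theorem TS_succ (a : ℤ → ℤ → ℤ) (d m : ℕ) (c c' : ℕ → ℕ → ℤ) (y : ℕ → ℤ)
    (hc' : ∀ p q, 1 ≤ p → p + 1 ≤ q → q ≤ m → c' p q = c p (q + 1))
    (hy : ∀ p, 1 ≤ p → p ≤ m → y p = c p (p + 1)) :
    TS a d (m + 1) c = S a (d + 1) m y + TS a (d + 1) m c' := by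
  unfold TS S
  rw [Finset.sum_Icc_succ_top (by omega), Finset.Icc_eq_empty (by omega : ¬ (m + 1 + 1 ≤ m + 1)),
    Finset.sum_empty, add_zero, ← Finset.sum_add_distrib]
  apply Finset.sum_congr rfl
  intro p hp
  rw [Finset.mem_Icc] at hp
  rw [sum_shift _ _ _ hp.2, hy p hp.1 hp.2]
  congr 1
  · congr 1; push_cast; ring
  · apply Finset.sum_congr rfl
    intro q hq
    rw [Finset.mem_Icc] at hq
    rw [hc' p q hp.1 hq.1 hq.2]
    congr 1; push_cast; ring

theorem P_iff (a : ℤ → ℤ → ℤ) (m : ℕ) : ∀ (d : ℕ) (x : ℕ → ℤ) (z : ℤ),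
    P a d m x z ↔ ∃ c, T m x c ∧ TS a d m c ≤ z := by
  induction m with
  | zero =>
    intro d x z
    constructor
    · intro h
      refine ⟨fun _ _ => 0, ⟨by intros; omega, by intros; omega, by intros; omega⟩, ?_⟩
      simpa [TS, P] using h
    · rintro ⟨c, _, h⟩
      simpa [TS, P] using h
  | succ m ih =>
    intro d x z
    constructor
    · rintro ⟨y, hy, hz⟩
      obtain ⟨c', ⟨t1, t2, t3⟩, hc⟩ := (ih _ _ _).1 hz
      refine ⟨fun p q => if p = q then x p else c' p (q - 1), ⟨?_, ?_, ?_⟩, ?_⟩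
      · intro p _ _
        simp
      · intro p q hp hpq hq
        simp only [Nat.add_sub_cancel]
        rw [if_neg (by omega : p ≠ q + 1)]
        by_cases h : p = q
        · subst h
          rw [if_pos rfl, t1 p hp (by omega)]
          exact (hy p hp (by omega)).1
        · rw [if_neg h]
          have := t2 p (q - 1) hp (by omega) (by omega)
          rwa [Nat.sub_add_cancel (by omega)] at this
      · intro p q hp hpq hq
        show (if p = q then x p else c' p (q - 1)) < (if p + 1 = q then x (p + 1) else c' (p + 1) (q - 1))
        rw [if_neg (by omega : p ≠ q)]
        by_cases h : p + 1 = q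
        · subst h
          rw [if_pos rfl, Nat.add_sub_cancel, t1 p hp (by omega)]
          exact (hy p hp (by omega)).2
        · rw [if_neg h]
          exact t3 p (q - 1) hp (by omega) (by omega)
      · rw [TS_succ a d m _ c' y]
        · omega
        · intro p q h1 h2 h3
          simp only [Nat.add_sub_cancel]
          rw [if_neg (by omega)]
        · intro p h1 h2
          simp only [Nat.add_sub_cancel]
          rw [if_neg (by omega), t1 p h1 h2]
    · rintro ⟨c, ⟨t1, t2, t3⟩, hc⟩
      refine ⟨fun p => c p (p + 1), ?_, (ih _ _ _).2 ⟨fun p q => c p (q + 1), ⟨?_, ?_, ?_⟩, ?_⟩⟩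
      · intro p hp hp'
        have e1 := t1 p hp (by omega)
        have e2 := t1 (p + 1) (by omega) (by omega)
        have e3 := t2 p p hp le_rfl (by omega)
        have e4 := t3 p (p + 1) hp le_rfl (by omega)
        simp only
        omega
      · intro p _ _; rfl
      · intro p q h1 h2 h3; exact t2 p (q + 1) h1 (by omega) (by omega)
      · intro p q h1 h2 h3; exact t3 p (q + 1) h1 (by omega) (by omega)
      · rw [TS_succ a d m c (fun p q => c p (q + 1)) (fun p => c p (p + 1))] at hc
        · omega
        · intros; rfl
        · intros; rfl

/-- the infimum in `MK` -/
noncomputable def inf (a : ℤ → ℤ → ℤ) (K : Finset ℕ) : ℤ :=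
  sInf {z : ℤ | ∃ c : ℕ → ℕ → ℤ, IsKTab K c ∧ z = tabSum a K c}

def kx (K : Finset ℕ) : ℕ → ℤ := fun p => (kth K p : ℤ)

theorem kth_eq (K : Finset ℕ) (p : ℕ) (hp : 1 ≤ p) (hp' : p ≤ K.card) :
    kth K p = (K.sort (· ≤ ·))[p - 1]'(by rw [Finset.length_sort]; omega) := by
  unfold kth
  rw [List.getD_eq_getElem]

theorem kx_sm (K : Finset ℕ) : SM K.card (kx K) := by
  intro p hp hp'
  unfold kx
  rw [kth_eq K p hp (by omega), kth_eq K (p + 1) (by omega) hp']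
  have := (Finset.sortedLT_sort K).pairwise
  rw [List.pairwise_iff_getElem] at this
  exact_mod_cast this (p - 1) (p + 1 - 1) _ _ (by omega)

theorem kx_mem (K : Finset ℕ) (j : ℕ) : Mem (j : ℤ) K.card (kx K) ↔ j ∈ K := by
  unfold Mem kx
  rw [← Finset.mem_sort (· ≤ ·), List.mem_iff_getElem]
  constructor
  · rintro ⟨p, hp, hp', e⟩
    refine ⟨p - 1, by rw [Finset.length_sort]; omega, ?_⟩
    rw [← kth_eq K p hp hp']
    exact_mod_cast e
  · rintro ⟨q, hq, e⟩
    rw [Finset.length_sort] at hq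
    refine ⟨q + 1, by omega, by omega, ?_⟩
    rw [kth_eq K _ (by omega) (by omega)]
    exact_mod_cast e

theorem inf_le_iff (a : ℤ → ℤ → ℤ) (h0 : ∀ k l, 0 ≤ a k l) (K : Finset ℕ) (z : ℤ) :
    inf a K ≤ z ↔ P a 0 K.card (kx K) z := by
  have e : ∀ c, tabSum a K c = TS a 0 K.card c := by
    intro c; simp [tabSum, TS]
  have bdd : BddBelow {z : ℤ | ∃ c : ℕ → ℕ → ℤ, IsKTab K c ∧ z = tabSum a K c} := by
    refine ⟨0, ?_⟩
    rintro z ⟨c, _, rfl⟩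
    exact Finset.sum_nonneg fun _ _ => Finset.sum_nonneg fun _ _ => h0 _ _
  have ne : {z : ℤ | ∃ c : ℕ → ℕ → ℤ, IsKTab K c ∧ z = tabSum a K c}.Nonempty := by
    refine ⟨_, fun p _ => kx K p, ⟨?_, ?_, ?_⟩, rfl⟩
    · intros; rfl
    · intros; exact le_rfl
    · intro p q h1 h2 h3
      exact kx_sm K p h1 (by omega)
  rw [P_iff]
  constructor
  · intro h
    obtain ⟨c, hc, hz⟩ := Int.csInf_mem ne bdd
    refine ⟨c, hc, ?_⟩
    rw [← e, ← hz]
    exact h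
  · rintro ⟨c, hc, hz⟩
    rw [← e] at hz
    exact le_trans (csInf_le bdd ⟨c, hc, rfl⟩) hz

theorem kx_swap (K : Finset ℕ) (i : ℕ) (hi : i ∉ K) (hi1 : i + 1 ∈ K) :
    (insert i (K.erase (i + 1))).card = K.card ∧
    ∀ p, 1 ≤ p → p ≤ K.card → sw i (kx K) p = kx (insert i (K.erase (i + 1))) p := by
  have hc : (insert i (K.erase (i + 1))).card = K.card := by
    rw [Finset.card_insert_of_notMem (by simp [hi]), Finset.card_erase_of_mem hi1]
    have := Finset.card_pos.2 ⟨_, hi1⟩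
    omega
  refine ⟨hc, ?_⟩
  let f : ℕ ↪ ℕ := (Equiv.swap i (i + 1)).toEmbedding
  have fv : ∀ k, k ∈ K → f k = if k = i + 1 then i else k := by
    intro k hk
    have hne : k ≠ i := by rintro rfl; exact hi hk
    simp only [f, Equiv.coe_toEmbedding]
    split_ifs with h
    · subst h; simp
    · exact Equiv.swap_apply_of_ne_of_ne hne h
  have hf : StrictMonoOn f K := by
    intro x hx y hy hxy
    have : x ≠ i := by rintro rfl; exact hi hx
    have : y ≠ i := by rintro rfl; exact hi hy
    rw [fv x hx, fv y hy]
    split_ifs <;> omega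
  have him : K.map f = insert i (K.erase (i + 1)) := by
    ext k
    simp only [Finset.mem_map, Finset.mem_insert, Finset.mem_erase]
    constructor
    · rintro ⟨q, hq, rfl⟩
      rw [fv q hq]
      split_ifs with h
      · exact Or.inl rfl
      · exact Or.inr ⟨h, hq⟩
    · rintro (rfl | ⟨h, hk⟩)
      · exact ⟨_, hi1, by rw [fv _ hi1]; simp⟩
      · exact ⟨k, hk, by rw [fv _ hk]; simp [h]⟩
  have hs := hf.map_finsetSort
  rw [him] at hs
  intro p hp hp'
  unfold sw kx
  rw [kth_eq K p hp hp', kth_eq _ p hp (by omega)]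
  simp only [← hs, List.getElem_map]
  rw [fv _ ((Finset.mem_sort (· ≤ ·)).1 (List.getElem_mem _))]
  split_ifs <;> first | rfl | omega

theorem inf_min (a b : ℤ → ℤ → ℤ) (ha : ∀ k l, 0 ≤ a k l) (hb : ∀ k l, 0 ≤ b k l)
    (K : Finset ℕ) (i : ℕ) (hi : i ∉ K) (hi1 : i + 1 ∈ K) (g r : ℕ → ℤ)
    (G : Good (i : ℤ) a b g r) :
    inf a K = min (inf b K + r 1) (inf b (insert i (K.erase (i + 1))) + g 1) := by
  apply eq_of_forall_ge_iff
  intro z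
  have h1 : Mem ((i : ℤ) + 1) K.card (kx K) := by exact_mod_cast (kx_mem K (i + 1)).2 hi1
  have h2 : ¬ Mem (i : ℤ) K.card (kx K) := fun h => hi ((kx_mem K i).1 h)
  obtain ⟨e1, e2⟩ := kx_swap K i hi hi1
  rw [inf_le_iff a ha, (main G K.card 0 (kx K) (kx_sm K)).2.2 h1 h2, min_le_iff,
    ← le_sub_iff_add_le, ← le_sub_iff_add_le, inf_le_iff b hb, inf_le_iff b hb, e1]
  have : P b 0 K.card (sw i (kx K)) (z - g (0 + 1)) ↔
      P b 0 K.card (kx (insert i (K.erase (i + 1)))) (z - g 1) :=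
    ⟨P_congr _ _ _ _ _ _ e2, P_congr _ _ _ _ _ _ fun p h h' => (e2 p h h').symm⟩
  rw [this]

def Rk (n : ℕ) (a : ℤ → ℤ → ℤ) (i : ℕ) : ℕ → ℤ
  | 0 => 0
  | k + 1 => max (Astar n a i (n - k)) (Rk n a i k)

/-- suffix maxima of `Astar` -/
def R (n : ℕ) (a : ℤ → ℤ → ℤ) (i l : ℕ) : ℤ := Rk n a i (n + 1 - l)

theorem R_succ (n : ℕ) (a : ℤ → ℤ → ℤ) (i l : ℕ) (h : l ≤ n) :
    R n a i l = max (Astar n a i l) (R n a i (l + 1)) := by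
  unfold R
  have e : n + 1 - l = (n - l) + 1 := by omega
  have e' : n - (n - l) = l := by omega
  rw [e, Rk, e']
  congr 2
  omega

theorem R_top (n : ℕ) (a : ℤ → ℤ → ℤ) (i l : ℕ) (h : n < l) : R n a i l = 0 := by
  unfold R
  have e : n + 1 - l = 0 := by omega
  rw [e, Rk]

theorem A_top (n : ℕ) (a : ℤ → ℤ → ℤ) (i l : ℕ) (h : n < l) : Astar n a i l = 0 := by
  unfold Astar
  rw [Finset.Icc_eq_empty (by omega), Finset.sum_empty]

theorem A_succ (n : ℕ) (a : ℤ → ℤ → ℤ) (i l : ℕ) (h : l ≤ n) :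
    Astar n a i l = a i ((l : ℤ) + 1) - a ((i : ℤ) + 1) ((l : ℤ) + 2) + Astar n a i (l + 1) := by
  unfold Astar
  have e : Finset.Icc (l + 1) (n + 1) = insert (l + 1) (Finset.Icc (l + 1 + 1) (n + 1)) := by
    ext q; simp only [Finset.mem_insert, Finset.mem_Icc]; omega
  rw [e, Finset.sum_insert (by simp)]
  push_cast
  congr 3

/-- downward induction -/
theorem down {n : ℕ} {Q : ℕ → Prop} (h0 : Q (n + 1)) (h1 : ∀ l, l ≤ n → Q (l + 1) → Q l) :
    ∀ l, l ≤ n + 1 → Q l := by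
  intro l hl
  obtain ⟨k, hk⟩ := Nat.exists_eq_add_of_le hl
  induction k generalizing l with
  | zero => have : l = n + 1 := by omega
            subst this; exact h0
  | succ k ih => exact h1 l (by omega) (ih (l + 1) (by omega) (by omega))

theorem R_nonneg (n : ℕ) (a : ℤ → ℤ → ℤ) (i l : ℕ) : 0 ≤ R n a i l := by
  rcases Nat.lt_or_ge n l with h | h
  · rw [R_top _ _ _ _ h]
  · refine down (n := n) (Q := fun l => 0 ≤ R n a i l) ?_ ?_ l (by omega)
    · rw [R_top _ _ _ _ (by omega)]
    · intro l hl h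
      rw [R_succ _ _ _ _ hl]
      exact le_max_of_le_right h

theorem A_le_R (n : ℕ) (a : ℤ → ℤ → ℤ) (i l : ℕ) : Astar n a i l ≤ R n a i l := by
  rcases Nat.lt_or_ge n l with h | h
  · rw [R_top _ _ _ _ h, A_top _ _ _ _ h]
  · rw [R_succ _ _ _ _ h]; exact le_max_left _ _

theorem R_step (n : ℕ) (a : ℤ → ℤ → ℤ) (i l : ℕ) : R n a i (l + 1) ≤ R n a i l := by
  rcases Nat.lt_or_ge n l with h | h
  · rw [R_top _ _ _ _ h, R_top _ _ _ _ (by omega)]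
  · rw [R_succ _ _ _ l h]; exact le_max_right _ _

theorem R_anti (n : ℕ) (a : ℤ → ℤ → ℤ) (i : ℕ) : Antitone (R n a i) :=
  antitone_nat_of_succ_le (R_step n a i)

theorem R_le (n : ℕ) (a : ℤ → ℤ → ℤ) (i l : ℕ) (c : ℤ) (hc : 0 ≤ c)
    (h : ∀ l', l ≤ l' → l' ≤ n → Astar n a i l' ≤ c) : R n a i l ≤ c := by
  rcases Nat.lt_or_ge n l with h' | h'
  · rw [R_top _ _ _ _ h']; exact hc
  · refine down (n := n) (Q := fun m => l ≤ m → R n a i m ≤ c) ?_ ?_ l (by omega) le_rfl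
    · intro _; rw [R_top _ _ _ _ (by omega)]; exact hc
    · intro m hm ih hlm
      rw [R_succ _ _ _ _ hm]
      exact max_le (h m hlm hm) (ih (by omega))

theorem eps_spec (n : ℕ) (a : ℤ → ℤ → ℤ) (i : ℕ) (hi : i ≤ n) :
    (∃ l, i ≤ l ∧ l ≤ n ∧ Astar n a i l = epsStar n a i) ∧
    ∀ l, i ≤ l → l ≤ n → Astar n a i l ≤ epsStar n a i := by
  have ne : ((Finset.Icc i n).image (Astar n a i)).Nonempty :=
    ⟨_, Finset.mem_image_of_mem _ (Finset.mem_Icc.2 ⟨le_rfl, hi⟩)⟩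
  obtain ⟨m, hm⟩ := Finset.max_of_nonempty ne
  have he : epsStar n a i = m := by unfold epsStar; rw [hm]; rfl
  rw [he]
  constructor
  · obtain ⟨l, hl, e⟩ := Finset.mem_image.1 (Finset.mem_of_max hm)
    rw [Finset.mem_Icc] at hl
    exact ⟨l, hl.1, hl.2, e⟩
  · intro l h1 h2
    exact Finset.le_max_of_eq (Finset.mem_image_of_mem _ (Finset.mem_Icc.2 ⟨h1, h2⟩)) hm

theorem le_spec (n : ℕ) (a : ℤ → ℤ → ℤ) (i : ℕ) (hi : i ≤ n) :
    i ≤ leStar n a i ∧ leStar n a i ≤ n ∧ Astar n a i (leStar n a i) = epsStar n a i ∧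
    ∀ l, leStar n a i < l → l ≤ n → Astar n a i l < epsStar n a i := by
  obtain ⟨⟨l0, h1, h2, h3⟩, hmax⟩ := eps_spec n a i hi
  have ne : ((Finset.Icc i n).filter fun l => Astar n a i l = epsStar n a i).Nonempty :=
    ⟨l0, Finset.mem_filter.2 ⟨Finset.mem_Icc.2 ⟨h1, h2⟩, h3⟩⟩
  obtain ⟨m, hm⟩ := Finset.max_of_nonempty ne
  have he : leStar n a i = m := by unfold leStar; rw [hm]; rfl
  rw [he]
  have hmem := Finset.mem_of_max hm
  rw [Finset.mem_filter, Finset.mem_Icc] at hmem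
  refine ⟨hmem.1.1, hmem.1.2, hmem.2, ?_⟩
  intro l hl hl'
  refine lt_of_le_of_ne (hmax l (by omega) hl') ?_
  intro e
  have := Finset.le_max_of_eq
    (Finset.mem_filter.2 ⟨Finset.mem_Icc.2 ⟨(by omega : i ≤ l), hl'⟩, e⟩) hm
  omega

theorem eps_eq (n : ℕ) (a : ℤ → ℤ → ℤ) (i : ℕ) (hi : i ≤ n) (h0 : 0 ≤ Astar n a i n) :
    epsStar n a i = R n a i i := by
  obtain ⟨⟨l0, h1, h2, h3⟩, hmax⟩ := eps_spec n a i hi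
  apply le_antisymm
  · rw [← h3]
    exact le_trans (A_le_R _ _ _ _) (R_anti n a i h1)
  · exact R_le _ _ _ _ _ (le_trans h0 (hmax n hi le_rfl)) hmax

theorem A_etil (n : ℕ) (a : ℤ → ℤ → ℤ) (i : ℕ) (hi : i ≤ n) : ∀ l, l ≤ n + 1 → i ≤ l →
    Astar n (etilStar n a i) i l = Astar n a i l -
      (if l < leStar n a i then 2 else if l = leStar n a i then 1 else 0) := by
  obtain ⟨h1, h2, -, -⟩ := le_spec n a i hi
  refine down (n := n) ?_ ?_
  · intro _
    rw [A_top _ _ _ _ (by omega), A_top _ _ _ _ (by omega), if_neg (by omega), if_neg (by omega)]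
    rfl
  · intro l hl ih hil
    rw [A_succ _ _ _ _ hl, A_succ n a _ _ hl, ih (by omega)]
    unfold etilStar
    generalize leStar n a i = L at *
    split_ifs <;> omega

theorem R_etil (n : ℕ) (a : ℤ → ℤ → ℤ) (i : ℕ) (hi : i ≤ n) (h0 : 0 ≤ Astar n a i n)
    (he : 0 < epsStar n a i) : ∀ l, l ≤ n + 1 → i ≤ l →
    R n (etilStar n a i) i l = R n a i l - (if l ≤ leStar n a i then 1 else 0) := by
  obtain ⟨h1, h2, h3, h4⟩ := le_spec n a i hi
  have hA := A_etil n a i hi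
  have hR := eps_eq n a i hi h0
  have hlt : R n a i (leStar n a i + 1) ≤ epsStar n a i - 1 :=
    R_le _ _ _ _ _ (by omega) fun l' k1 k2 => by have := h4 l' (by omega) k2; omega
  have hmid : ∀ l, i ≤ l → l ≤ leStar n a i → R n a i l = epsStar n a i := by
    intro l k1 k2
    have := R_anti n a i k1
    have := R_anti n a i k2
    have := A_le_R n a i (leStar n a i)
    omega
  refine down (n := n) ?_ ?_
  · intro _
    rw [R_top _ _ _ _ (by omega), R_top _ _ _ _ (by omega), if_neg (by omega)]
    rfl
  · intro l hl ih hil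
    have ih' := ih (by omega)
    rw [R_succ n (etilStar n a i) _ _ hl, ih', hA l (by omega) hil]
    have hs := R_succ n a i l hl
    have hAR := A_le_R n a i l
    rcases Nat.lt_trichotomy l (leStar n a i) with k | k | k
    · have e1 := hmid l hil (by omega)
      have e2 := hmid (l + 1) (by omega) (by omega)
      rw [if_pos k, if_pos (by omega), if_pos (by omega), max_def]
      split_ifs <;> omega
    · have e1 := hmid l hil (by omega)
      rw [if_neg (by omega), if_pos k, if_neg (by omega), if_pos (by omega), max_def]
      subst k
      split_ifs <;> omega
    · rw [if_neg (by omega), if_neg (by omega), if_neg (by omega), if_neg (by omega), hs]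
      simp

/-- explicit form of the result of all the raising operators -/
def bar (i : ℕ) (ρ : ℕ → ℤ) (a : ℤ → ℤ → ℤ) : ℤ → ℤ → ℤ := fun k l =>
  if k = (i : ℤ) ∧ (i : ℤ) + 1 ≤ l then a k l - (ρ (l - 1).toNat - ρ l.toNat)
  else if k = (i : ℤ) + 1 ∧ (i : ℤ) + 2 ≤ l then a k l + (ρ (l - 1).toNat - ρ l.toNat)
  else a k l

theorem R_etil' (n : ℕ) (a : ℤ → ℤ → ℤ) (i : ℕ) (hi : i ≤ n) (h0 : 0 ≤ Astar n a i n)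
    (he : 0 < epsStar n a i) : ∀ l, i ≤ l →
    R n (etilStar n a i) i l = R n a i l - (if l ≤ leStar n a i then 1 else 0) := by
  intro l hl
  rcases Nat.lt_or_ge n l with h | h
  · obtain ⟨h1, h2, -, -⟩ := le_spec n a i hi
    rw [R_top _ _ _ _ h, R_top _ _ _ _ h, if_neg (by omega)]
    rfl
  · exact R_etil n a i hi h0 he l (by omega) hl

theorem bar_etil (n : ℕ) (a : ℤ → ℤ → ℤ) (i : ℕ) (hi : i ≤ n) (h0 : 0 ≤ Astar n a i n)
    (he : 0 < epsStar n a i) :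
    bar i (R n (etilStar n a i) i) (etilStar n a i) = bar i (R n a i) a := by
  obtain ⟨h1, h2, -, -⟩ := le_spec n a i hi
  have hR := R_etil' n a i hi h0 he
  funext k l
  unfold bar
  by_cases hl : (i : ℤ) + 1 ≤ l
  · rw [hR _ (by omega : i ≤ (l - 1).toNat), hR _ (by omega : i ≤ l.toNat)]
    unfold etilStar
    generalize leStar n a i = L at *
    split_ifs <;> omega
  · rw [if_neg (by omega), if_neg (by omega), if_neg (by omega), if_neg (by omega)]
    unfold etilStar
    rw [if_neg (by omega), if_neg (by omega)]

theorem iter_eq (n : ℕ) (i : ℕ) (hi : i ≤ n) (N : ℕ) : ∀ a : ℤ → ℤ → ℤ, 0 ≤ Astar n a i n →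
    epsStar n a i = N → (fun b => etilStar n b i)^[N] a = bar i (R n a i) a := by
  induction N with
  | zero =>
    intro a h0 he
    have hR := eps_eq n a i hi h0
    have hz : ∀ l, i ≤ l → R n a i l = 0 := by
      intro l hl
      have := R_anti n a i hl
      have := R_nonneg n a i l
      rw [he] at hR
      push_cast at hR
      omega
    funext k l
    simp only [Function.iterate_zero, id_eq]
    unfold bar
    by_cases hl : (i : ℤ) + 1 ≤ l
    · rw [hz _ (by omega : i ≤ (l - 1).toNat), hz _ (by omega : i ≤ l.toNat)]
      simp
    · rw [if_neg (by omega), if_neg (by omega)]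
  | succ N ih =>
    intro a h0 he
    have hpos : 0 < epsStar n a i := by rw [he]; push_cast; omega
    obtain ⟨h1, h2, h3, h4⟩ := le_spec n a i hi
    have h0' : 0 ≤ Astar n (etilStar n a i) i n := by
      rw [A_etil n a i hi n (by omega) hi, if_neg (by omega)]
      split_ifs with h
      · rw [← h] at h3; omega
      · omega
    rw [Function.iterate_succ_apply, ← bar_etil n a i hi h0 hpos]
    apply ih _ h0'
    rw [eps_eq n _ i hi h0', R_etil' n a i hi h0 hpos i le_rfl, if_pos h1, ← eps_eq n a i hi h0, he]
    push_cast
    ring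

theorem telescope (n : ℕ) (a : ℤ → ℤ → ℤ) (i : ℕ) : ∀ L, L ≤ n + 1 →
    ∑ l ∈ Finset.Icc (L + 1) (n + 1), (R n a i (l - 1) - R n a i l) = R n a i L := by
  refine down (n := n) ?_ ?_
  · rw [Finset.Icc_eq_empty (by omega), R_top _ _ _ _ (by omega)]; rfl
  · intro L hL ih
    have e : Finset.Icc (L + 1) (n + 1) = insert (L + 1) (Finset.Icc (L + 1 + 1) (n + 1)) := by
      ext q; simp only [Finset.mem_insert, Finset.mem_Icc]; omega
    rw [e, Finset.sum_insert (by simp), ih, Nat.add_sub_cancel]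
    ring

theorem mdiff (n : ℕ) (b : ℤ → ℤ → ℤ) (j : ℕ) (hj : j ≤ n) :
    mwt n b (j + 1) = mwt n b j + ∑ l ∈ Finset.Icc (j + 2) (n + 1), b ((j : ℤ) + 1) l
      - ∑ k ∈ Finset.Icc 1 j, b k ((j : ℤ) + 1) := by
  unfold mwt
  rw [Finset.sum_Icc_succ_top (by omega)]
  have e : Finset.Icc (j + 1) (n + 1) = insert (j + 1) (Finset.Icc (j + 1 + 1) (n + 1)) := by
    ext q; simp only [Finset.mem_insert, Finset.mem_Icc]; omega
  have e2 : ∀ k : ℕ, ∑ l ∈ Finset.Icc (j + 1) (n + 1), b (k : ℤ) (l : ℤ)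
      = b k ((j : ℤ) + 1) + ∑ l ∈ Finset.Icc (j + 1 + 1) (n + 1), b (k : ℤ) (l : ℤ) := by
    intro k
    rw [e, Finset.sum_insert (by simp)]
    push_cast
    rfl
  simp only [e2, Finset.sum_add_distrib]
  push_cast
  ring

def pre (a : ℤ → ℤ → ℤ) (K : Finset ℕ) : ℤ :=
  ∑ k ∈ K, ∑ s ∈ Finset.Icc 1 (k - 1), a (s : ℤ) (k : ℤ)

theorem pre_bar (i : ℕ) (hi : 1 ≤ i) (ρ : ℕ → ℤ) (a : ℤ → ℤ → ℤ) (K : Finset ℕ)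
    (hK : i + 1 ∈ K) : pre a K = pre (bar i ρ a) K + (ρ i - ρ (i + 1)) := by
  have e : ρ i - ρ (i + 1) = ∑ k ∈ K, if k = i + 1 then ρ i - ρ (i + 1) else 0 := by
    rw [Finset.sum_ite_eq', if_pos hK]
  rw [e, pre, pre, ← Finset.sum_add_distrib]
  apply Finset.sum_congr rfl
  intro k hk
  have pt : ∀ s ∈ Finset.Icc 1 (k - 1), a (s : ℤ) (k : ℤ) = bar i ρ a s k +
      ((if s = i then ρ (k - 1) - ρ k else 0) - (if s = i + 1 then ρ (k - 1) - ρ k else 0)) := by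
    intro s hs
    rw [Finset.mem_Icc] at hs
    have e1 : ((k : ℤ) - 1).toNat = k - 1 := by omega
    unfold bar
    rw [e1, Int.toNat_natCast]
    split_ifs <;> omega
  rw [Finset.sum_congr rfl pt, Finset.sum_add_distrib, Finset.sum_sub_distrib,
    Finset.sum_ite_eq', Finset.sum_ite_eq']
  simp only [Finset.mem_Icc]
  congr 1
  by_cases h : k = i + 1
  · subst h
    rw [if_pos (by omega), if_neg (by omega), if_pos rfl]
    simp
  · rw [if_neg h]
    split_ifs <;> omega

theorem good (n : ℕ) (a : ℤ → ℤ → ℤ) (ha : IsLusztig n a) (i : ℕ) :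
    Good (i : ℤ) a (bar i (R n a i) a)
      (fun d => R n a i (i + d - 1) - Astar n a i (i + d - 1))
      (fun d => R n a i (i + d - 1) - R n a i (i + d)) := by
  have hA : ∀ l, i ≤ l → Astar n a i l = a i ((l : ℤ) + 1) - a ((i : ℤ) + 1) ((l : ℤ) + 2)
      + Astar n a i (l + 1) := by
    intro l hl
    rcases Nat.lt_or_ge n l with h | h
    · rw [A_top _ _ _ _ h, A_top _ _ _ _ (by omega), ha.2 _ _ (by omega), ha.2 _ _ (by omega)]
      rfl
    · exact A_succ _ _ _ _ h
  have bw : ∀ d : ℕ, 1 ≤ d → bar i (R n a i) a i (i + d) =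
      a i (i + d) - (R n a i (i + d - 1) - R n a i (i + d)) := by
    intro d hd
    unfold bar
    rw [if_pos (by omega)]
    congr 3 <;> congr 1
    omega
  constructor
  · exact bw
  · intro d hd
    unfold bar
    rw [if_neg (by omega), if_pos (by omega)]
    congr 3 <;> congr 1 <;> omega
  · intro d hd
    rw [bw d hd]
    have h := hA (i + d - 1) (by omega)
    have e : i + d - 1 + 1 = i + d := by omega
    have e1 : ((i + d - 1 : ℕ) : ℤ) + 1 = i + d := by omega
    have e2 : ((i + d - 1 : ℕ) : ℤ) + 2 = i + 1 + d := by omega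
    rw [e, e1, e2] at h
    have e3 : i + (d + 1) - 1 = i + d := by omega
    simp only [e3]
    omega
  · intro d _
    have := A_le_R n a i (i + d - 1)
    omega
  · intro d hd
    have := R_step n a i (i + d - 1)
    rw [Nat.sub_add_cancel (by omega)] at this
    omega
  · intro d hd
    rcases Nat.lt_or_ge n (i + d - 1) with h | h
    · left; rw [R_top _ _ _ _ h, A_top _ _ _ _ h]; rfl
    · have := R_succ n a i _ h
      rw [Nat.sub_add_cancel (by omega), max_def] at this
      split_ifs at this <;> omega
  · intro k l h1 h2
    unfold bar
    rw [if_neg (by tauto), if_neg (by tauto)]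

theorem bar_nonneg (n : ℕ) (a : ℤ → ℤ → ℤ) (ha : IsLusztig n a) (i : ℕ) (k l : ℤ) :
    0 ≤ bar i (R n a i) a k l := by
  have h0 := ha.1 k l
  unfold bar
  split_ifs with h1 h2
  · obtain ⟨h1, h2⟩ := h1
    obtain ⟨L, rfl⟩ : ∃ L : ℕ, l = (L : ℤ) + 1 := ⟨(l - 1).toNat, by omega⟩
    have e1 : ((L : ℤ) + 1 - 1).toNat = L := by omega
    have e2 : ((L : ℤ) + 1).toNat = L + 1 := by omega
    rw [e1, e2]
    rcases Nat.lt_or_ge n L with h | h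
    · rw [R_top _ _ _ _ h, R_top _ _ _ _ (by omega)]; omega
    · have q1 := R_succ n a i L h
      have q2 := A_succ n a i L h
      have q3 := A_le_R n a i (L + 1)
      have q4 := ha.1 ((i : ℤ) + 1) ((L : ℤ) + 2)
      rw [h1] at h0 ⊢
      rw [max_def] at q1
      split_ifs at q1 <;> omega
  · have := R_anti n a i (by omega : (l - 1).toNat ≤ l.toNat)
    omega
  · exact h0

theorem final (n : ℕ) (a : ℤ → ℤ → ℤ) (ha : IsLusztig n a)
    (i : ℕ) (hi1 : 1 ≤ i) (hi2 : i ≤ n) (b : ℤ → ℤ → ℤ) (hb : b = bar i (R n a i) a) :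
    -2 * mwt n b i + mwt n b (i - 1) + mwt n b (i + 1) =
      ∑ s ∈ Finset.Icc 1 (i - 1), b s i - ∑ s ∈ Finset.Icc 1 i, b s ((i : ℤ) + 1)
        + R n a i i + R n a i (i + 1) - Astar n a i i := by
  have r1 : ∑ l ∈ Finset.Icc (i + 1) (n + 1), b (i : ℤ) l =
      ∑ l ∈ Finset.Icc (i + 1) (n + 1), a (i : ℤ) l - R n a i i := by
    rw [← telescope n a i i (by omega), ← Finset.sum_sub_distrib]
    apply Finset.sum_congr rfl
    intro l hl
    rw [Finset.mem_Icc] at hl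
    rw [hb]; unfold bar
    have e1 : ((l : ℤ) - 1).toNat = l - 1 := by omega
    rw [if_pos (by omega), e1, Int.toNat_natCast]
  have r2 : ∑ l ∈ Finset.Icc (i + 2) (n + 1), b ((i : ℤ) + 1) l =
      ∑ l ∈ Finset.Icc (i + 2) (n + 1), a ((i : ℤ) + 1) l + R n a i (i + 1) := by
    rw [← telescope n a i (i + 1) (by omega), ← Finset.sum_add_distrib]
    apply Finset.sum_congr rfl
    intro l hl
    rw [Finset.mem_Icc] at hl
    rw [hb]; unfold bar
    have e1 : ((l : ℤ) - 1).toNat = l - 1 := by omega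
    rw [if_neg (by omega), if_pos (by omega), e1, Int.toNat_natCast]
  have rA : Astar n a i i = ∑ l ∈ Finset.Icc (i + 1) (n + 1), a (i : ℤ) l -
      ∑ l ∈ Finset.Icc (i + 2) (n + 1), a ((i : ℤ) + 1) l := by
    unfold Astar
    rw [Finset.sum_sub_distrib]
    congr 1
    have s1 := sum_shift (fun l => a ((i : ℤ) + 1) l) i (n + 1) (by omega)
    have s2 := sum_shift (fun l => a ((i : ℤ) + 1) l) i n (by omega)
    have s3 := Finset.sum_Icc_succ_top (by omega : i + 1 ≤ n + 1 + 1) (fun l : ℕ => a ((i : ℤ) + 1) l)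
    have z : a ((i : ℤ) + 1) ((n + 1 + 1 : ℕ) : ℤ) = 0 := ha.2 _ _ (by push_cast; omega)
    have e : Finset.Icc (i + 1) (n + 1) = insert (i + 1) (Finset.Icc (i + 2) (n + 1)) := by
      ext q; simp only [Finset.mem_insert, Finset.mem_Icc]; omega
    have s4 : ∑ l ∈ Finset.Icc (i + 1) (n + 1), a ((i : ℤ) + 1) (l : ℤ) =
        a ((i : ℤ) + 1) ((i + 1 : ℕ) : ℤ) + ∑ l ∈ Finset.Icc (i + 2) (n + 1), a ((i : ℤ) + 1) l := by
      rw [e, Finset.sum_insert (by simp)]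
    push_cast at s1 s3 s4 z ⊢
    linarith
  obtain ⟨j, rfl⟩ : ∃ j, i = j + 1 := ⟨i - 1, by omega⟩
  have d1 := mdiff n b j (by omega)
  have d2 := mdiff n b (j + 1) hi2
  rw [Nat.add_sub_cancel]
  push_cast at *
  linarith

end Tab

/-- for every Lusztig datum `a`, every `1 ≤ i ≤ n`, and every `K ∈ M_n^×`
with `i ∉ K` and `i+1 ∈ K`, one has
`M_K(a) = min{ M_K(ā), M_{s_iK}(ā) + ⟨h_i, wt(ā)⟩ − ε_i^*(a) }`, where
`ā = (ẽ_i^*)^{ε_i^*(a)} a`, `s_iK = (K ∖ {i+1}) ∪ {i}`, and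
`⟨h_i, wt(ā)⟩ = −2 m_i(ā) + m_{i−1}(ā) + m_{i+1}(ā)`. -/
theorem stmt17 (n : ℕ) (hn : 1 ≤ n) (a : ℤ → ℤ → ℤ) (ha : IsLusztig n a)
    (i : ℕ) (hi1 : 1 ≤ i) (hi2 : i ≤ n)
    (K : Finset ℕ) (hK : K ⊆ Finset.Icc 1 (n + 1)) (hKne : K ≠ ∅)
    (hKfull : K ≠ Finset.Icc 1 (n + 1)) (hiK : i ∉ K) (hi1K : i + 1 ∈ K) :
    let abar : ℤ → ℤ → ℤ := (fun b => etilStar n b i)^[(epsStar n a i).toNat] a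
    MK n a K =
      min (MK n abar K)
        (MK n abar (insert i (K.erase (i + 1))) +
          (-2 * mwt n abar i + mwt n abar (i - 1) + mwt n abar (i + 1)) -
          epsStar n a i) := by
  intro abar
  have h0 : 0 ≤ Astar n a i n := by
    rw [Tab.A_succ n a i n le_rfl, Tab.A_top n a i (n + 1) (by omega),
      ha.2 ((i : ℤ) + 1) ((n : ℤ) + 2) (by omega)]
    have := ha.1 i ((n : ℤ) + 1)
    omega
  have hR := Tab.eps_eq n a i hi2 h0
  have heps : 0 ≤ epsStar n a i := by rw [hR]; exact Tab.R_nonneg _ _ _ _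
  have hb : abar = Tab.bar i (Tab.R n a i) a :=
    Tab.iter_eq n i hi2 _ a h0 (Int.toNat_of_nonneg heps).symm
  have hb0 : ∀ k l, 0 ≤ abar k l := by rw [hb]; exact Tab.bar_nonneg n a ha i
  have G := Tab.good n a ha i
  rw [← hb] at G
  have hmin := Tab.inf_min a abar ha.1 hb0 K i hiK hi1K _ _ G
  have hpre := Tab.pre_bar i hi1 (Tab.R n a i) a K hi1K
  rw [← hb] at hpre
  have hfin := Tab.final n a ha i hi1 hi2 abar hb
  clear_value abar
  have hMK : ∀ c : ℤ → ℤ → ℤ, MK n c K = -Tab.pre c K + Tab.inf c K := by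
    intro c; unfold MK; rw [if_neg (by tauto)]; rfl
  have hMK' : MK n abar (insert i (K.erase (i + 1))) =
      -Tab.pre abar (insert i (K.erase (i + 1))) + Tab.inf abar (insert i (K.erase (i + 1))) := by
    unfold MK
    rw [if_neg]
    · rfl
    · rintro (h | h)
      · exact Finset.insert_ne_empty _ _ h
      · have : i + 1 ∈ Finset.Icc 1 (n + 1) := Finset.mem_Icc.2 ⟨by omega, by omega⟩
        rw [← h] at this
        simp at this
  have hpre' : Tab.pre abar (insert i (K.erase (i + 1))) = Tab.pre abar K
      + ∑ s ∈ Finset.Icc 1 (i - 1), abar s i - ∑ s ∈ Finset.Icc 1 i, abar s ((i : ℤ) + 1) := by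
    unfold Tab.pre
    rw [Finset.sum_insert (by simp [hiK]), Finset.sum_erase_eq_sub hi1K, Nat.add_sub_cancel]
    push_cast
    ring
  rw [hMK, hMK, hMK', hpre', hfin, hmin, hpre, hR, Nat.add_sub_cancel]
  generalize Tab.inf abar (insert i (K.erase (i + 1))) = u
  generalize Tab.inf abar K = v
  rw [min_def, min_def]
  split_ifs <;> linarith
end
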